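/- arXiv:2210.04967 — 3 statements merged into one kernel-verified Lean document; each statement's English description precedes it below -/
import Mathlib

section
/- Let H be a finite simple graph with maximum degree Δ(H) ≥ 9. Let k ≥ 3 and let p_1 ≥ p_2 ≥ … ≥ p_k ≥ 2 be positive integers with p_1 ≥ p_2 ≥ 4 and p_1 + p_2 + … + p_k = Δ(H) − 1 + k. If ω(H) = p_1, then there exists a partition of V(H) into sets V_1, V_2, …, V_k such that H[V_i] is K_{p_i}-free for each 1 ≤ i ≤ k and V_1 is a K_{p_1}-free subset of V(H) of maximum cardinality. -/
/-!
Write `q i = p i - 1` and let `o` be the colour of the class to be maximized, called red. Among the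
partial colourings whose red class is a largest `K_{q o + 1}`-free set and whose other classes `i`
are `K_{q i + 1}`-free, take one with the fewest uncoloured vertices and, among those, the fewest
edges inside the non-red classes. Suppose a vertex `a` is uncoloured. Every class `i` blocks `a`, so
contains a `q i`-clique of neighbours of `a`, and since `deg a ≤ ∑ i, q i + 1` all classes but at
most one contain exactly `q i` neighbours. Giving `a` the colour of a suitable neighbour and
uncolouring that neighbour (a kick) yields another optimal colouring.

The kicks are explored breadth first, each vertex being uncoloured at most once, until no new vertex
can be kicked. The cliques blocking the vertices reached in this tree overlap so little that too
many kicks lead from originally non-red to originally red vertices: counting these pairs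
from both sides gives a contradiction.
-/

open Finset

namespace CliqueFreeColoring

section NeighborCliques

variable {V : Type*} {H : SimpleGraph V} [DecidableRel H.Adj] {r : ℕ} {A K L : Finset V}
  {a s t u v w z : V}

variable (H) in
/-- The neighbours of `v` that lie in the vertex set `A`. -/
def nbrsIn (A : Finset V) (v : V) : Finset V := {u ∈ A | H.Adj v u}

@[simp]
lemma mem_nbrsIn : u ∈ nbrsIn H A v ↔ u ∈ A ∧ H.Adj v u := by simp [nbrsIn]

/-- `K` is an `r`-clique among the neighbours of `v` in `A`: the obstruction to adding `v` to the
`K_{r+1}`-free set `A`. -/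
structure IsNbrClique (H : SimpleGraph V) [DecidableRel H.Adj] (r : ℕ) (A : Finset V) (v : V)
    (K : Finset V) : Prop where
  subset : K ⊆ nbrsIn H A v
  isNClique : H.IsNClique r K

namespace IsNbrClique

lemma mem (hK : IsNbrClique H r A v K) (hu : u ∈ K) : u ∈ A := (mem_nbrsIn.1 (hK.subset hu)).1

lemma adj (hK : IsNbrClique H r A v K) (hu : u ∈ K) : H.Adj v u := (mem_nbrsIn.1 (hK.subset hu)).2

lemma card_eq (hK : IsNbrClique H r A v K) : #K = r := hK.isNClique.card_eq

lemma pairwise_adj (hK : IsNbrClique H r A v K) (hu : u ∈ K) (hw : w ∈ K) (h : u ≠ w) : H.Adj u w :=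
  hK.isNClique.isClique hu hw h

lemma eq_of_subset (hK : IsNbrClique H r A v K) (hL : IsNbrClique H r A v L) (h : K ⊆ L) : K = L :=
  eq_of_subset_of_card_le h (hL.card_eq.trans hK.card_eq.symm).le

end IsNbrClique

lemma isNbrClique_nbrsIn_of_card_eq (hex : ∃ K, IsNbrClique H r A v K) (hr : #(nbrsIn H A v) = r) :
    IsNbrClique H r A v (nbrsIn H A v) := by
  obtain ⟨K, hK⟩ := hex
  rwa [eq_of_subset_of_card_le hK.subset (hr.trans hK.card_eq.symm).le] at hK

lemma exists_isNbrClique_of_not_cliqueFreeOn_insert [DecidableEq V]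
    (hA : H.CliqueFreeOn A (r + 1)) (h : ¬ H.CliqueFreeOn (insert a A : Finset V) (r + 1)) :
    ∃ K, IsNbrClique H r A a K := by
  simp only [SimpleGraph.CliqueFreeOn, not_forall, not_not] at h
  obtain ⟨K, hKA, hK⟩ := h
  rw [Finset.coe_subset, subset_insert_iff] at hKA
  have ha : a ∈ K := by
    by_contra ha
    rw [erase_eq_of_notMem ha] at hKA
    exact hA (by exact_mod_cast hKA) hK
  refine ⟨K.erase a, fun u hu ↦ mem_nbrsIn.2 ⟨hKA hu, ?_⟩, hK.erase_of_mem ha⟩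
  exact hK.isClique ha (mem_of_mem_erase hu) (ne_of_mem_erase hu).symm

lemma card_nbrsIn_insert [DecidableEq V] (ha : a ∉ A) :
    #(nbrsIn H (insert a A) v) = #(nbrsIn H A v) + if H.Adj v a then 1 else 0 := by
  unfold nbrsIn
  rw [filter_insert]
  split_ifs <;> simp [ha]

variable (H) in
/-- The sum of the degrees in `H[A]`, that is twice the number of edges of `H[A]`. -/
def degreeSum (A : Finset V) : ℕ := ∑ v ∈ A, #(nbrsIn H A v)

lemma degreeSum_insert [DecidableEq V] (ha : a ∉ A) :
    degreeSum H (insert a A) = degreeSum H A + 2 * #(nbrsIn H A a) := by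
  have hsum : ∑ v ∈ A, #(nbrsIn H (insert a A) v) = degreeSum H A + #(nbrsIn H A a) := by
    simp only [card_nbrsIn_insert ha, sum_add_distrib, ← card_filter, H.adj_comm _ a]
    rfl
  rw [degreeSum, sum_insert ha, hsum, card_nbrsIn_insert ha, if_neg (H.irrefl)]
  ring

variable [DecidableEq V]

lemma nbrsIn_erase_self : nbrsIn H (A.erase v) v = nbrsIn H A v := by
  ext u
  simp only [mem_nbrsIn, mem_erase]
  exact ⟨fun h ↦ ⟨h.1.2, h.2⟩, fun h ↦ ⟨⟨h.2.ne', h.1⟩, h.2⟩⟩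

lemma degreeSum_exchange (ha : a ∉ A) (hu : u ∈ A) (hau : H.Adj a u) :
    degreeSum H (insert a (A.erase u)) + 2 * (#(nbrsIn H A u) + 1) =
      degreeSum H A + 2 * #(nbrsIn H A a) := by
  have hdegA := degreeSum_insert (H := H) (notMem_erase u A)
  have hcard := card_nbrsIn_insert (H := H) (v := a) (notMem_erase u A)
  rw [insert_erase hu] at hdegA hcard
  rw [nbrsIn_erase_self] at hdegA
  rw [if_pos hau] at hcard
  rw [degreeSum_insert (fun h ↦ ha (mem_of_mem_erase h))]
  omega

instance : DecidablePred (IsNbrClique H r A v) := fun K ↦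
  decidable_of_iff (K ⊆ nbrsIn H A v ∧ H.IsNClique r K) ⟨fun h ↦ ⟨h.1, h.2⟩, fun h ↦ ⟨h.1, h.2⟩⟩

variable (H) in
/-- The intersection of all `r`-cliques among the neighbours of `v` in `A` (all of `nbrsIn H A v` if
there are none). If `A` is `K_{r+1}`-free, these are the vertices `u` for which exchanging `u` for
`v` keeps it so. -/
def core (r : ℕ) (A : Finset V) (v : V) : Finset V :=
  {u ∈ nbrsIn H A v | ∀ K ∈ (nbrsIn H A v).powerset, IsNbrClique H r A v K → u ∈ K}

lemma core_subset_nbrsIn : core H r A v ⊆ nbrsIn H A v := filter_subset _ _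

lemma mem_of_mem_core (hu : u ∈ core H r A v) : u ∈ A := (mem_nbrsIn.1 (core_subset_nbrsIn hu)).1

lemma adj_of_mem_core (hu : u ∈ core H r A v) : H.Adj v u :=
  (mem_nbrsIn.1 (core_subset_nbrsIn hu)).2

lemma core_subset (hK : IsNbrClique H r A v K) : core H r A v ⊆ K :=
  fun _ hu ↦ (mem_filter.1 hu).2 K (mem_powerset.2 hK.subset) hK

lemma mem_core_of_forall (hex : ∃ K, IsNbrClique H r A v K)
    (h : ∀ K, IsNbrClique H r A v K → u ∈ K) : u ∈ core H r A v :=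
  let ⟨K, hK⟩ := hex
  mem_filter.2 ⟨hK.subset (h K hK), fun L _ ↦ h L⟩

lemma cliqueFreeOn_exchange (hA : H.CliqueFreeOn A (r + 1)) (hu : u ∈ core H r A a) :
    H.CliqueFreeOn (insert a (A.erase u) : Finset V) (r + 1) := by
  by_contra h
  obtain ⟨K, hK⟩ := exists_isNbrClique_of_not_cliqueFreeOn_insert
    (SimpleGraph.CliqueFreeOn.subset _ (coe_subset.2 (erase_subset u A)) hA) h
  have hKA : IsNbrClique H r A a K :=
    ⟨hK.subset.trans (filter_subset_filter _ (erase_subset u A)), hK.isNClique⟩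
  exact notMem_erase u A (hK.mem (core_subset hKA hu))

lemma core_eq_of_forall_eq (hK : IsNbrClique H r A v K) (h : ∀ L, IsNbrClique H r A v L → L = K) :
    core H r A v = K :=
  (core_subset hK).antisymm fun _ hu ↦ mem_core_of_forall ⟨K, hK⟩ fun L hL ↦ h L hL ▸ hu

lemma core_eq_nbrsIn_of_card_eq (hex : ∃ K, IsNbrClique H r A v K) (hr : #(nbrsIn H A v) = r) :
    core H r A v = nbrsIn H A v :=
  core_eq_of_forall_eq (isNbrClique_nbrsIn_of_card_eq hex hr) fun _ hL ↦
    hL.eq_of_subset (isNbrClique_nbrsIn_of_card_eq hex hr) hL.subset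

/-- The neighbourhood of `v` in `A` is a *fork* with tips `s` and `t`: it has `r + 1` elements, the
tips are not adjacent, and removing either tip leaves an `r`-clique. The remaining `r - 1`
neighbours then form the core of `v`. -/
structure IsFork (H : SimpleGraph V) [DecidableRel H.Adj] (r : ℕ) (A : Finset V) (v s t : V) :
    Prop where
  left_mem : s ∈ nbrsIn H A v
  right_mem : t ∈ nbrsIn H A v
  ne : s ≠ t
  not_adj : ¬ H.Adj s t
  isNbrClique_erase_left : IsNbrClique H r A v ((nbrsIn H A v).erase s)
  isNbrClique_erase_right : IsNbrClique H r A v ((nbrsIn H A v).erase t)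

namespace IsFork

lemma symm (h : IsFork H r A v s t) : IsFork H r A v t s :=
  ⟨h.right_mem, h.left_mem, h.ne.symm, fun hts ↦ h.not_adj hts.symm, h.isNbrClique_erase_right,
    h.isNbrClique_erase_left⟩

lemma card_nbrsIn (h : IsFork H r A v s t) : #(nbrsIn H A v) = r + 1 := by
  rw [← card_erase_add_one h.left_mem, h.isNbrClique_erase_left.card_eq]

lemma eq_erase_or_eq_erase (h : IsFork H r A v s t) (hK : IsNbrClique H r A v K) :
    K = (nbrsIn H A v).erase s ∨ K = (nbrsIn H A v).erase t := by
  by_cases hs : s ∈ K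
  · refine .inr (hK.eq_of_subset h.isNbrClique_erase_right (subset_erase.2 ⟨hK.subset, ?_⟩))
    intro ht
    exact h.not_adj (hK.pairwise_adj hs ht h.ne)
  · exact .inl (hK.eq_of_subset h.isNbrClique_erase_left (subset_erase.2 ⟨hK.subset, hs⟩))

lemma mem_core_iff (h : IsFork H r A v s t) :
    u ∈ core H r A v ↔ u ∈ nbrsIn H A v ∧ u ≠ s ∧ u ≠ t := by
  refine ⟨fun hu ↦ ⟨core_subset_nbrsIn hu, ?_, ?_⟩, fun ⟨hu, hs, ht⟩ ↦ ?_⟩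
  · exact ne_of_mem_erase (core_subset h.isNbrClique_erase_left hu)
  · exact ne_of_mem_erase (core_subset h.isNbrClique_erase_right hu)
  · refine mem_core_of_forall ⟨_, h.isNbrClique_erase_left⟩ fun K hK ↦ ?_
    rcases h.eq_erase_or_eq_erase hK with rfl | rfl <;> simp_all

lemma card_core_add_one (h : IsFork H r A v s t) : #(core H r A v) + 1 = r := by
  have hcore : core H r A v = ((nbrsIn H A v).erase s).erase t := by
    ext u
    simp only [h.mem_core_iff, mem_erase]
    tauto
  rw [hcore, card_erase_add_one (mem_erase.2 ⟨h.ne.symm, h.right_mem⟩),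
    h.isNbrClique_erase_left.card_eq]

end IsFork

lemma exists_eq_erase_of_isNbrClique_of_ne (hN : #(nbrsIn H A v) ≤ r + 1)
    (hK : IsNbrClique H r A v K) (hL : IsNbrClique H r A v L) (hne : L ≠ K) :
    ∃ s ∈ nbrsIn H A v, K = (nbrsIn H A v).erase s := by
  obtain ⟨s, hsL, hsK⟩ := not_subset.1 fun h ↦ hne (hL.eq_of_subset hK h)
  have hs := hL.subset hsL
  refine ⟨s, hs, eq_of_subset_of_card_le (subset_erase.2 ⟨hK.subset, hsK⟩) ?_⟩
  rw [card_erase_of_mem hs, hK.card_eq]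
  omega

lemma isNbrClique_core_or_isFork (hA : H.CliqueFreeOn A (r + 1)) (hN : #(nbrsIn H A v) ≤ r + 1)
    (hex : ∃ K, IsNbrClique H r A v K) :
    IsNbrClique H r A v (core H r A v) ∨ ∃ s t, IsFork H r A v s t := by
  obtain ⟨K, hK⟩ := hex
  by_cases huniq : ∀ L, IsNbrClique H r A v L → L = K
  · exact .inl (by rwa [core_eq_of_forall_eq hK huniq])
  push Not at huniq
  obtain ⟨L, hL, hne⟩ := huniq
  obtain ⟨s, hs, rfl⟩ := exists_eq_erase_of_isNbrClique_of_ne hN hK hL hne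
  obtain ⟨t, ht, rfl⟩ := exists_eq_erase_of_isNbrClique_of_ne hN hL hK hne.symm
  have hst : s ≠ t := fun h ↦ hne (by rw [h])
  refine .inr ⟨s, t, hs, ht, hst, fun hadj ↦ ?_, hK, hL⟩
  -- If the tips were adjacent, the whole neighbourhood would be an `(r + 1)`-clique inside `A`.
  have hclique : H.IsNClique (r + 1) (insert s ((nbrsIn H A v).erase s)) := by
    refine hK.isNClique.insert fun b hb ↦ ?_
    rcases eq_or_ne b t with rfl | hbt
    · exact hadj
    · exact hL.pairwise_adj (mem_erase.2 ⟨hst, hs⟩) (mem_erase.2 ⟨hbt, mem_of_mem_erase hb⟩)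
        (ne_of_mem_erase hb).symm
  rw [insert_erase hs] at hclique
  exact hA (coe_subset.2 (filter_subset _ _)) hclique

lemma IsNbrClique.exchange (hK : IsNbrClique H r A a K) (hu : u ∈ K) :
    IsNbrClique H r (insert a (A.erase u)) u (insert a (K.erase u)) := by
  refine ⟨insert_subset ?_ fun z hz ↦ ?_, hK.isNClique.insert_erase (fun w hw ↦ ?_) hu⟩
  · simp [(hK.adj hu).symm]
  · obtain ⟨hzu, hzK⟩ := mem_erase.1 hz
    simp [hzu, hK.mem hzK, hK.pairwise_adj hu hzK hzu.symm]
  · exact hK.adj (mem_sdiff.1 hw).1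

lemma mem_core_of_mem_nbrsIn_exchange (hex : ∃ K, IsNbrClique H r A a K) (hu : u ∈ core H r A a)
    (hcard : #(nbrsIn H (insert a (A.erase u)) u) = r)
    (hz : z ∈ nbrsIn H (insert a (A.erase u)) u) (hza : z ≠ a) : z ∈ core H r A a := by
  refine mem_core_of_forall hex fun K hK ↦ ?_
  have hK' := hK.exchange (core_subset hK hu)
  rw [← eq_of_subset_of_card_le hK'.subset (hcard.trans hK'.card_eq.symm).le] at hz
  exact mem_of_mem_erase ((mem_insert.1 hz).resolve_left hza)

lemma card_nbrsIn_sdiff_le_one (ha : a ∉ A) (hK : IsNbrClique H r A a K) (hu : u ∈ K)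
    (hN : #(nbrsIn H (insert a (A.erase u)) u) ≤ r + 1) : #(nbrsIn H A u \ K) ≤ 1 := by
  have hK' := hK.exchange hu
  have hsub : nbrsIn H A u \ K ⊆ nbrsIn H (insert a (A.erase u)) u := fun z hz ↦ by
    obtain ⟨⟨hzA, huz⟩, -⟩ : (z ∈ A ∧ H.Adj u z) ∧ z ∉ K := by simpa using hz
    simp [hzA, huz, huz.ne']
  have hdisj : Disjoint (insert a (K.erase u)) (nbrsIn H A u \ K) := by
    refine disjoint_left.2 fun z hz hz' ↦ ?_
    obtain ⟨hzN, hzK⟩ := mem_sdiff.1 hz'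
    rcases mem_insert.1 hz with rfl | hz
    · exact ha (mem_nbrsIn.1 hzN).1
    · exact hzK (mem_of_mem_erase hz)
  have hunion := card_le_card (union_subset hK'.subset hsub)
  rw [card_union_of_disjoint hdisj, hK'.card_eq] at hunion
  omega

lemma IsFork.nbrsIn_exchange (h : IsFork H r A a s t) (ha : a ∉ A) (hu : u ∈ core H r A a)
    (hN : #(nbrsIn H (insert a (A.erase u)) u) ≤ r + 1) :
    nbrsIn H (insert a (A.erase u)) u = insert a ((nbrsIn H A a).erase u) := by
  obtain ⟨huN, hus, hut⟩ := h.mem_core_iff.1 hu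
  refine (eq_of_subset_of_card_le ?_ ?_).symm
  · intro z hz
    have hs := (h.isNbrClique_erase_left.exchange (mem_erase.2 ⟨hus, huN⟩)).subset
    have ht := (h.isNbrClique_erase_right.exchange (mem_erase.2 ⟨hut, huN⟩)).subset
    rcases eq_or_ne z s with rfl | hzs
    · exact ht (by simp_all [h.ne])
    · exact hs (by simp_all)
  · rw [card_insert_of_notMem (by simp [ha]), card_erase_of_mem huN, h.card_nbrsIn]
    omega

end NeighborCliques

section Colorings

variable {V ι : Type*} [Fintype V] [DecidableEq ι]

/-- The vertices of colour `j` in the partial colouring `c`; the value `none` marks an uncoloured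
vertex. -/
def colorClass (c : V → Option ι) (j : ι) : Finset V := {v | c v = some j}

variable {c c' : V → Option ι} {a u v w y z : V} {i j : ι}

@[simp]
lemma mem_colorClass : v ∈ colorClass c j ↔ c v = some j := by simp [colorClass]

section Optimality

variable {H : SimpleGraph V} {o : ι} {q : ι → ℕ}

/-- Every colour class `j` is `K_{q j + 1}`-free, and the class of the distinguished colour `o` is
as large as any `K_{q o + 1}`-free set. -/
structure IsFeasible (H : SimpleGraph V) (o : ι) (q : ι → ℕ) (c : V → Option ι) : Prop where
  cliqueFreeOn : ∀ j, H.CliqueFreeOn (colorClass c j) (q j + 1)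
  card_le : ∀ A : Finset V, H.CliqueFreeOn A (q o + 1) → #A ≤ #(colorClass c o)

lemma IsFeasible.of_cliqueFreeOn (hc : IsFeasible H o q c)
    (hfree : ∀ j, H.CliqueFreeOn (colorClass c' j) (q j + 1))
    (hcard : #(colorClass c' o) = #(colorClass c o)) : IsFeasible H o q c' :=
  ⟨hfree, fun A hA ↦ hcard ▸ hc.card_le A hA⟩

variable [DecidableRel H.Adj]

lemma IsFeasible.exists_isNbrClique_of_ne (hc : IsFeasible H o q c) (hv : c v ≠ some o) :
    ∃ K, IsNbrClique H (q o) (colorClass c o) v K := by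
  classical
  refine exists_isNbrClique_of_not_cliqueFreeOn_insert (hc.cliqueFreeOn o) fun hfree ↦ ?_
  have hcard := hc.card_le _ hfree
  rw [card_insert_of_notMem (by simpa using hv)] at hcard
  omega

variable [Fintype ι]

variable (H o) in
/-- The number of uncoloured vertices and, as a tie-breaker, the number of edges inside the classes
other than `o` (counted twice). -/
def cost (c : V → Option ι) : ℕ ×ₗ ℕ :=
  toLex (#{v | c v = none}, ∑ j ∈ univ.erase o, degreeSum H (colorClass c j))

/-- A feasible partial colouring of least cost. -/
structure IsOptimal (H : SimpleGraph V) [DecidableRel H.Adj] (o : ι) (q : ι → ℕ)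
    (c : V → Option ι) : Prop extends IsFeasible H o q c where
  cost_le : ∀ c', IsFeasible H o q c' → cost H o c ≤ cost H o c'

lemma exists_isOptimal : ∃ c : V → Option ι, IsOptimal H o q c := by
  classical
  obtain ⟨A, hA, hmax⟩ := exists_max_image {A : Finset V | H.CliqueFreeOn A (q o + 1)} card
    ⟨∅, by simp [SimpleGraph.CliqueFreeOn, SimpleGraph.isNClique_iff]⟩
  simp only [mem_filter_univ] at hA hmax
  have hfeas : IsFeasible H o q fun v ↦ if v ∈ A then some o else none := by
    have hself : colorClass (fun v ↦ if v ∈ A then some o else none) o = A := by ext; simp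
    refine ⟨fun j ↦ ?_, by rwa [hself]⟩
    rcases eq_or_ne j o with rfl | hj
    · rwa [hself]
    · have hempty : colorClass (fun v ↦ if v ∈ A then some o else none) j = ∅ := by
        ext; simp [hj.symm]
      simp [hempty, SimpleGraph.CliqueFreeOn, SimpleGraph.isNClique_iff]
  obtain ⟨c, hc, hmin⟩ := exists_min_image {c : V → Option ι | IsFeasible H o q c} (cost H o)
    ⟨_, (mem_filter_univ _).2 hfeas⟩
  simp only [mem_filter_univ] at hc hmin
  exact ⟨c, hc, hmin⟩

/-- The vertex `a` has exactly `q j` neighbours of colour `j`. For an uncoloured vertex under an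
optimal colouring this is the least possible number. -/
def IsTight (H : SimpleGraph V) [DecidableRel H.Adj] (q : ι → ℕ) (c : V → Option ι) (j : ι)
    (a : V) : Prop :=
  #(nbrsIn H (colorClass c j) a) = q j

lemma sum_card_nbrsIn_colorClass_le (c : V → Option ι) (v : V) :
    ∑ j, #(nbrsIn H (colorClass c j) v) ≤ H.degree v := by
  classical
  rw [← card_biUnion, ← H.card_neighborFinset_eq_degree]
  · exact card_le_card fun u ↦ by simp
  · refine fun i _ j _ hij ↦ disjoint_left.2 fun u hi hj ↦ hij ?_
    rw [mem_nbrsIn, mem_colorClass] at hi hj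
    exact Option.some_injective _ (hi.1.symm.trans hj.1)

namespace IsOptimal

lemma exists_isNbrClique (hc : IsOptimal H o q c) (ha : c a = none) (j : ι) :
    ∃ K, IsNbrClique H (q j) (colorClass c j) a K := by
  classical
  rcases eq_or_ne j o with rfl | hj
  · exact hc.toIsFeasible.exists_isNbrClique_of_ne (by simp [ha])
  refine exists_isNbrClique_of_not_cliqueFreeOn_insert (hc.cliqueFreeOn j) fun hfree ↦ ?_
  -- Otherwise `a` could be given the colour `j`.
  have hself : colorClass (Function.update c a (some j)) j = insert a (colorClass c j) := by
    ext v
    rcases eq_or_ne v a with rfl | hv <;> simp [*]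
  have hother {i : ι} (hi : i ≠ j) :
      colorClass (Function.update c a (some j)) i = colorClass c i := by
    ext v
    rcases eq_or_ne v a with rfl | hv <;> simp [*, hi.symm]
  have hfeas : IsFeasible H o q (Function.update c a (some j)) := by
    refine hc.of_cliqueFreeOn (fun i ↦ ?_) (by rw [hother hj.symm])
    rcases eq_or_ne i j with rfl | hi
    · rwa [hself]
    · rw [hother hi]; exact hc.cliqueFreeOn i
  have hnone : #{v | Function.update c a (some j) v = none} < #{v | c v = none} := by
    refine card_lt_card (ssubset_iff_exists_cons_subset.2 ⟨a, by simp, fun v hv ↦ ?_⟩)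
    rcases eq_or_ne v a with rfl | hva <;> simp_all
  exact (Prod.Lex.toLex_lt_toLex.2 (.inl hnone)).not_ge (hc.cost_le _ hfeas)

lemma le_card_nbrsIn (hc : IsOptimal H o q c) (ha : c a = none) (j : ι) :
    q j ≤ #(nbrsIn H (colorClass c j) a) := by
  obtain ⟨K, hK⟩ := hc.exists_isNbrClique ha j
  exact hK.card_eq ▸ card_le_card hK.subset

lemma card_nbrsIn_le (hc : IsOptimal H o q c) (hdeg : ∀ v, H.degree v ≤ ∑ j, q j + 1)
    (ha : c a = none) (j : ι) : #(nbrsIn H (colorClass c j) a) ≤ q j + 1 := by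
  classical
  have hsum := (sum_card_nbrsIn_colorClass_le c a).trans (hdeg a)
  rw [← add_sum_erase _ _ (mem_univ j), ← add_sum_erase _ q (mem_univ j)] at hsum
  have := sum_le_sum (s := univ.erase j) fun i _ ↦ hc.le_card_nbrsIn ha i
  omega

lemma isTight_of_not_isTight (hc : IsOptimal H o q c) (hdeg : ∀ v, H.degree v ≤ ∑ j, q j + 1)
    (ha : c a = none) (hij : i ≠ j) (hi : ¬ IsTight H q c i a) : IsTight H q c j a := by
  have hmem : i ∈ univ.erase j := mem_erase.2 ⟨hij, mem_univ i⟩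
  have hsum := (sum_card_nbrsIn_colorClass_le c a).trans (hdeg a)
  rw [← add_sum_erase _ _ (mem_univ j), ← add_sum_erase _ q (mem_univ j),
    ← add_sum_erase _ _ hmem, ← add_sum_erase _ q hmem] at hsum
  have := sum_le_sum (s := (univ.erase j).erase i) fun i _ ↦ hc.le_card_nbrsIn ha i
  have := hc.le_card_nbrsIn ha i
  have := hc.le_card_nbrsIn ha j
  unfold IsTight at *
  omega

lemma isNbrClique_nbrsIn (hc : IsOptimal H o q c) (ha : c a = none) (hj : IsTight H q c j a) :
    IsNbrClique H (q j) (colorClass c j) a (nbrsIn H (colorClass c j) a) :=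
  isNbrClique_nbrsIn_of_card_eq (hc.exists_isNbrClique ha j) hj

lemma le_card_nbrsIn_of_isTight (hc : IsOptimal H o q c) (ha : c a = none) (hy : c y = some j)
    (hay : H.Adj a y) (ht : IsTight H q c j a) :
    q j ≤ #(nbrsIn H (colorClass c j) y) + 1 := by
  classical
  have hclique := hc.isNbrClique_nbrsIn ha ht
  have hyN : y ∈ nbrsIn H (colorClass c j) a := by simp [hy, hay]
  have hsub : (nbrsIn H (colorClass c j) a).erase y ⊆ nbrsIn H (colorClass c j) y := fun z hz ↦ by
    obtain ⟨hzy, hz⟩ := mem_erase.1 hz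
    exact mem_nbrsIn.2 ⟨hclique.mem hz, hclique.pairwise_adj hyN hz hzy.symm⟩
  have hcard := card_le_card hsub
  rw [card_erase_of_mem hyN, hclique.card_eq] at hcard
  omega

end IsOptimal

end Optimality

section Kick

variable [DecidableEq V]

/-- The partial colouring obtained by exchanging the colours of `a` and `v`. It is used when `a` is
uncoloured: then `a` takes over the colour of `v`, and `v` is kicked out of its class. -/
def kick (c : V → Option ι) (a v : V) : V → Option ι := c ∘ Equiv.swap a v

omit [Fintype V] [DecidableEq ι] in
lemma kick_apply_left : kick c a v a = c v := by simp [kick]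

omit [Fintype V] [DecidableEq ι] in
lemma kick_apply_right : kick c a v v = c a := by simp [kick]

omit [Fintype V] [DecidableEq ι] in
lemma kick_apply_of_ne (ha : z ≠ a) (hv : z ≠ v) : kick c a v z = c z := by
  simp [kick, Equiv.swap_apply_of_ne_of_ne ha hv]

lemma card_filter_kick_eq (x : Option ι) : #{z | kick c a v z = x} = #{z | c z = x} :=
  card_equiv (Equiv.swap a v) fun z ↦ by rw [mem_filter_univ, mem_filter_univ]; rfl

lemma colorClass_kick_self (ha : c a = none) (hv : c v = some j) :
    colorClass (kick c a v) j = insert a ((colorClass c j).erase v) := by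
  ext z
  rcases eq_or_ne z a with rfl | hza
  · simp [kick_apply_left, hv]
  rcases eq_or_ne z v with rfl | hzv
  · simp [kick_apply_right, ha, hza]
  · simp [kick_apply_of_ne, hza, hzv]

lemma colorClass_kick_of_ne (ha : c a = none) (hv : c v = some j) (hi : i ≠ j) :
    colorClass (kick c a v) i = colorClass c i := by
  ext z
  rcases eq_or_ne z a with rfl | hza
  · simp [kick_apply_left, hv, ha, hi.symm]
  rcases eq_or_ne z v with rfl | hzv
  · simp [kick_apply_right, hv, ha, hi.symm]
  · simp [kick_apply_of_ne, hza, hzv]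

variable [Fintype ι] {H : SimpleGraph V} [DecidableRel H.Adj] {o : ι} {q : ι → ℕ}

lemma sum_degreeSum_kick (ha : c a = none) (hj : j ≠ o) (hy : c y = some j) (hay : H.Adj a y) :
    ∑ i ∈ univ.erase o, degreeSum H (colorClass (kick c a y) i) +
        2 * (#(nbrsIn H (colorClass c j) y) + 1) =
      ∑ i ∈ univ.erase o, degreeSum H (colorClass c i) +
        2 * #(nbrsIn H (colorClass c j) a) := by
  have hrest : ∑ i ∈ (univ.erase o).erase j, degreeSum H (colorClass (kick c a y) i) =
      ∑ i ∈ (univ.erase o).erase j, degreeSum H (colorClass c i) :=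
    sum_congr rfl fun i hi ↦ by rw [colorClass_kick_of_ne ha hy (ne_of_mem_erase hi)]
  have hexch := degreeSum_exchange (H := H) (A := colorClass c j) (a := a) (by simp [ha])
    (mem_colorClass.2 hy) hay
  have hjo : j ∈ univ.erase o := mem_erase.2 ⟨hj, mem_univ j⟩
  rw [← add_sum_erase _ _ hjo, ← add_sum_erase (univ.erase o) (fun i ↦ degreeSum H (colorClass c i))
    hjo, hrest, colorClass_kick_self ha hy]
  omega

namespace IsOptimal

lemma core_eq_nbrsIn (hc : IsOptimal H o q c) (ha : c a = none) (hj : IsTight H q c j a) :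
    core H (q j) (colorClass c j) a = nbrsIn H (colorClass c j) a :=
  core_eq_nbrsIn_of_card_eq (hc.exists_isNbrClique ha j) hj

lemma isNbrClique_core_or_isFork (hc : IsOptimal H o q c) (hdeg : ∀ v, H.degree v ≤ ∑ j, q j + 1)
    (ha : c a = none) :
    IsNbrClique H (q o) (colorClass c o) a (core H (q o) (colorClass c o) a) ∨
      ∃ s t, IsFork H (q o) (colorClass c o) a s t :=
  CliqueFreeColoring.isNbrClique_core_or_isFork (hc.cliqueFreeOn o) (hc.card_nbrsIn_le hdeg ha o)
    (hc.exists_isNbrClique ha o)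

lemma of_kick (hc : IsOptimal H o q c)
    (hfree : ∀ j, H.CliqueFreeOn (colorClass (kick c a v) j) (q j + 1))
    (hcost : ∑ j ∈ univ.erase o, degreeSum H (colorClass (kick c a v) j) ≤
      ∑ j ∈ univ.erase o, degreeSum H (colorClass c j)) : IsOptimal H o q (kick c a v) where
  toIsFeasible := hc.of_cliqueFreeOn hfree (card_filter_kick_eq _)
  cost_le c' hc' := by
    refine le_trans ?_ (hc.cost_le c' hc')
    exact Prod.Lex.toLex_le_toLex'.2 ⟨(card_filter_kick_eq _).le, fun _ ↦ hcost⟩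

lemma degreeSum_le_of_kick (hc : IsOptimal H o q c)
    (hfree : ∀ j, H.CliqueFreeOn (colorClass (kick c a v) j) (q j + 1)) :
    ∑ j ∈ univ.erase o, degreeSum H (colorClass c j) ≤
      ∑ j ∈ univ.erase o, degreeSum H (colorClass (kick c a v) j) :=
  (Prod.Lex.toLex_le_toLex'.1 (hc.cost_le _ (hc.of_cliqueFreeOn hfree (card_filter_kick_eq _)))).2
    (card_filter_kick_eq _).symm

lemma kick_of_mem_core (hc : IsOptimal H o q c) (ha : c a = none)
    (hu : u ∈ core H (q o) (colorClass c o) a) : IsOptimal H o q (kick c a u) := by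
  have hcu : c u = some o := mem_colorClass.1 (mem_of_mem_core hu)
  refine hc.of_kick (fun j ↦ ?_) (sum_congr rfl fun j hj ↦ ?_).le
  · rcases eq_or_ne j o with rfl | hj
    · rw [colorClass_kick_self ha hcu]
      exact cliqueFreeOn_exchange (hc.cliqueFreeOn j) hu
    · rw [colorClass_kick_of_ne ha hcu hj]
      exact hc.cliqueFreeOn j
  · rw [colorClass_kick_of_ne ha hcu (ne_of_mem_erase hj)]

lemma exists_isNbrClique_exchange (hc : IsOptimal H o q c) (ha : c a = none)
    (hu : u ∈ core H (q o) (colorClass c o) a) (hy : c y ≠ some o) (hya : y ≠ a) :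
    ∃ K, IsNbrClique H (q o) (insert a ((colorClass c o).erase u)) y K := by
  have hcu : c u = some o := mem_colorClass.1 (mem_of_mem_core hu)
  rw [← colorClass_kick_self ha hcu]
  refine (hc.kick_of_mem_core ha hu).exists_isNbrClique_of_ne ?_
  rwa [kick_apply_of_ne hya (by rintro rfl; exact hy hcu)]

variable (hc : IsOptimal H o q c) (ha : c a = none) (hj : j ≠ o) (hy : c y = some j)
  (hay : H.Adj a y) (ht : IsTight H q c j a)

include hc ha hy hay ht

lemma cliqueFreeOn_kick_of_isTight (i : ι) :
    H.CliqueFreeOn (colorClass (kick c a y) i) (q i + 1) := by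
  rcases eq_or_ne i j with rfl | hi
  · rw [colorClass_kick_self ha hy]
    refine cliqueFreeOn_exchange (hc.cliqueFreeOn i) ?_
    rw [hc.core_eq_nbrsIn ha ht]
    simp [hy, hay]
  · rw [colorClass_kick_of_ne ha hy hi]
    exact hc.cliqueFreeOn i

include hj

lemma kick_of_isTight : IsOptimal H o q (kick c a y) := by
  refine hc.of_kick (hc.cliqueFreeOn_kick_of_isTight ha hy hay ht) ?_
  have := hc.le_card_nbrsIn_of_isTight ha hy hay ht
  have := sum_degreeSum_kick ha hj hy hay
  unfold IsTight at ht
  omega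

lemma isTight_kick : IsTight H q (kick c a y) j y := by
  have := hc.le_card_nbrsIn_of_isTight ha hy hay ht
  have := sum_degreeSum_kick ha hj hy hay
  have := hc.degreeSum_le_of_kick (hc.cliqueFreeOn_kick_of_isTight ha hy hay ht)
  have hins : #(nbrsIn H (colorClass (kick c a y) j) y) = #(nbrsIn H (colorClass c j) y) + 1 := by
    rw [colorClass_kick_self ha hy, card_nbrsIn_insert (by simp [ha]), if_pos hay.symm,
      nbrsIn_erase_self]
  unfold IsTight at *
  omega

end IsOptimal

end Kick

end Colorings

section LocalStructure

variable {V ι : Type*} [Fintype V] [DecidableEq V] [Fintype ι] [DecidableEq ι] {H : SimpleGraph V}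
  [DecidableRel H.Adj] {o : ι} {q : ι → ℕ} {c : V → Option ι} {r : ℕ} {A D K : Finset V}
  {a s t u v w y z : V}

omit [Fintype V] in
lemma notMem_of_isNbrClique_exchange (hcard : #(nbrsIn H A a) = r)
    (hu : u ∈ nbrsIn H A a) (ht : t ∈ nbrsIn H A a) (htu : t ≠ u) (hyu : ¬ H.Adj y u)
    (hK : IsNbrClique H r (insert a (A.erase t)) y K) : a ∉ K := by
  intro haK
  have hsub : K.erase a ⊆ ((nbrsIn H A a).erase u).erase t := fun z hz ↦ by
    obtain ⟨hza, hz⟩ := mem_erase.1 hz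
    obtain ⟨hzt, hzA⟩ := mem_erase.1 ((mem_insert.1 (hK.mem hz)).resolve_left hza)
    have hzu : z ≠ u := by rintro rfl; exact hyu (hK.adj hz)
    simp [hzt, hzu, hzA, hK.pairwise_adj haK hz hza.symm]
  have hlt := card_le_card hsub
  rw [card_erase_of_mem haK, hK.card_eq, card_erase_of_mem (mem_erase.2 ⟨htu, ht⟩),
    card_erase_of_mem hu, hcard] at hlt
  have : 1 < r := hcard ▸ one_lt_card.2 ⟨t, ht, u, hu, htu⟩
  omega

omit [Fintype V] in
lemma disjoint_of_isNbrClique_exchange (hD : #D = r) (hext : ∀ s ∈ D, #(nbrsIn H A s \ D) ≤ 1)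
    (hu : u ∈ D) (ht : t ∈ D) (htu : t ≠ u) (hyu : ¬ H.Adj y u)
    (hK : IsNbrClique H r (insert a (A.erase t)) y K) (haK : a ∉ K) : Disjoint K D := by
  have hKA {z : V} (hz : z ∈ K) : z ≠ t ∧ z ∈ A :=
    mem_erase.1 ((mem_insert.1 (hK.mem hz)).resolve_left fun h ↦ haK (h ▸ hz))
  refine disjoint_left.2 fun s hsK hsD ↦ ?_
  have hout : K \ D ⊆ nbrsIn H A s \ D := fun z hz ↦ by
    obtain ⟨hzK, hzD⟩ := mem_sdiff.1 hz
    have hsz : s ≠ z := by rintro rfl; exact hzD hsD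
    simp [hKA hzK, hzD, hK.pairwise_adj hsK hzK hsz]
  have hin : K ∩ D ⊆ (D.erase u).erase t := fun z hz ↦ by
    obtain ⟨hzK, hzD⟩ := mem_inter.1 hz
    have hzu : z ≠ u := by rintro rfl; exact hyu (hK.adj hzK)
    simp [hKA hzK, hzD, hzu]
  have hcard_out := (card_le_card hout).trans (hext s hsD)
  have hcard_in := card_le_card hin
  rw [card_erase_of_mem (mem_erase.2 ⟨htu, ht⟩), card_erase_of_mem hu, hD] at hcard_in
  have hcard := card_sdiff_add_card_inter K D
  rw [hK.card_eq] at hcard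
  have : 1 < r := hD ▸ one_lt_card.2 ⟨t, ht, u, hu, htu⟩
  omega

omit [Fintype V] in
lemma disjoint_core_of_isFork (hf : IsFork H r A a s t)
    (hsub : ∀ z ∈ core H r A a, nbrsIn H A z ⊆ nbrsIn H A a) (hv : v ∈ core H r A a)
    (hK : IsNbrClique H r (insert a (A.erase v)) y K) (haK : a ∉ K) :
    Disjoint K (core H r A a) := by
  refine disjoint_left.2 fun z hzK hz ↦ ?_
  have hKsub : K ⊆ (nbrsIn H A a).erase v := fun w hw ↦ by
    have hwa : w ≠ a := by rintro rfl; exact haK hw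
    obtain ⟨hwv, hwA⟩ := mem_erase.1 (mem_of_mem_insert_of_ne (hK.mem hw) hwa)
    refine mem_erase.2 ⟨hwv, ?_⟩
    rcases eq_or_ne z w with rfl | hzw
    · exact core_subset_nbrsIn hz
    · exact hsub z hz (mem_nbrsIn.2 ⟨hwA, hK.pairwise_adj hzK hw hzw⟩)
  obtain ⟨hvN, hvs, hvt⟩ := hf.mem_core_iff.1 hv
  have hKeq : K = (nbrsIn H A a).erase v := by
    refine eq_of_subset_of_card_le hKsub ?_
    rw [card_erase_of_mem hvN, hf.card_nbrsIn, hK.card_eq, Nat.add_sub_cancel]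
  refine hf.not_adj (hK.pairwise_adj ?_ ?_ hf.ne) <;> rw [hKeq, mem_erase]
  exacts [⟨hvs.symm, hf.left_mem⟩, ⟨hvt.symm, hf.right_mem⟩]

omit [Fintype V] [DecidableEq V] in
lemma not_adj_of_isNbrClique (hω : H.CliqueFree (r + 2)) (hK : IsNbrClique H r A a K)
    (hadj : ∀ v ∈ K, H.Adj y v) : ¬ H.Adj y a := fun h ↦ by
  classical
  refine hω _ ((hK.isNClique.insert (a := a) fun b hb ↦ hK.adj hb).insert (a := y) fun b hb ↦ ?_)
  rcases mem_insert.1 hb with rfl | hb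
  exacts [h, hadj b hb]

omit [Fintype V] [DecidableRel H.Adj] in
lemma exists_mem_sdiff_forall_adj {L : Finset V} (hA : H.CliqueFreeOn A (r + 1))
    (hK : H.IsNClique r K) (hKA : K ⊆ A) (hv : v ∈ K) (hL : H.IsNClique r L) (hLA : L ⊆ A.erase v)
    (hLK : #(L \ K) ≤ 1) : ∃ e ∈ A \ K, (∀ w ∈ K, w ≠ v → H.Adj w e) ∧ ¬ H.Adj v e := by
  have hsub : L ∩ K ⊆ K.erase v := fun z hz ↦ by
    obtain ⟨hzL, hzK⟩ := mem_inter.1 hz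
    exact mem_erase.2 ⟨ne_of_mem_erase (hLA hzL), hzK⟩
  have hcard := card_sdiff_add_card_inter L K
  have hle := card_le_card hsub
  have hpos := card_pos.2 ⟨v, hv⟩
  rw [hL.card_eq] at hcard
  rw [hK.card_eq] at hpos
  rw [card_erase_of_mem hv, hK.card_eq] at hle
  have heq := eq_of_subset_of_card_le hsub (by rw [card_erase_of_mem hv, hK.card_eq]; omega)
  obtain ⟨e, he⟩ := card_pos.1 (show 0 < #(L \ K) by omega)
  obtain ⟨heL, heK⟩ := mem_sdiff.1 he
  have heA := mem_of_mem_erase (hLA heL)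
  have hadj {w : V} (hw : w ∈ K) (hwv : w ≠ v) : H.Adj w e :=
    hL.isClique (mem_of_mem_inter_left (heq ▸ mem_erase.2 ⟨hwv, hw⟩)) heL
      (by rintro rfl; exact heK hw)
  refine ⟨e, mem_sdiff.2 ⟨heA, heK⟩, fun w ↦ hadj, fun hve ↦ ?_⟩
  refine hA (coe_subset.2 (insert_subset heA hKA)) (hK.insert fun w hw ↦ ?_)
  rcases eq_or_ne w v with rfl | hwv
  exacts [hve.symm, (hadj hw hwv).symm]

omit [Fintype V] in
lemma exists_forall_disjoint_of_card_nbrsIn_sdiff_le_one (hr : 3 ≤ r)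
    (hA : H.CliqueFreeOn A (r + 1)) (hK : H.IsNClique r K) (hKA : K ⊆ A)
    (hext : ∀ u ∈ K, #(nbrsIn H A u \ K) ≤ 1) :
    ∃ v ∈ K, ∀ L, H.IsNClique r L → L ⊆ A.erase v → Disjoint K L := by
  by_contra! hL
  have hex {v : V} (hv : v ∈ K) :
      ∃ e ∈ A \ K, (∀ w ∈ K, w ≠ v → H.Adj w e) ∧ ¬ H.Adj v e := by
    obtain ⟨L, hLr, hLA, hdisj⟩ := hL v hv
    obtain ⟨w, hwK, hwL⟩ := not_disjoint_iff.1 hdisj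
    refine exists_mem_sdiff_forall_adj hA hK hKA hv hLr hLA ((card_le_card ?_).trans (hext w hwK))
    refine fun z hz ↦ ?_
    obtain ⟨hzL, hzK⟩ := mem_sdiff.1 hz
    have hwz : w ≠ z := by rintro rfl; exact hzK hwK
    simp [mem_of_mem_erase (hLA hzL), hLr.isClique hwL hzL hwz, hzK]
  obtain ⟨v₁, h₁, v₂, h₂, v₃, h₃, h₁₂, h₁₃, h₂₃⟩ := two_lt_card.1 (hK.card_eq.symm ▸ hr : 2 < #K)
  obtain ⟨e₁, he₁, hadj₁, hnadj₁⟩ := hex h₁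
  obtain ⟨e₂, he₂, hadj₂, -⟩ := hex h₂
  have hmem {e : V} (he : e ∈ A \ K) (hadj : H.Adj v₃ e) : e ∈ nbrsIn H A v₃ \ K :=
    mem_sdiff.2 ⟨mem_nbrsIn.2 ⟨(mem_sdiff.1 he).1, hadj⟩, (mem_sdiff.1 he).2⟩
  obtain rfl := card_le_one.1 (hext v₃ h₃) e₁ (hmem he₁ (hadj₁ v₃ h₃ h₁₃.symm)) e₂
    (hmem he₂ (hadj₂ v₃ h₃ h₂₃.symm))
  exact hnadj₁ (hadj₂ v₁ h₁ h₁₂)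

omit [Fintype V] in
lemma mem_of_disjoint_core_of_isFork {B : Finset V} (hr : 3 ≤ r) (hf : IsFork H r A a s t)
    (hv : v ∈ core H r A a) (hvs : v ≠ s)
    (hadj : ∀ z ∈ (nbrsIn H A a).erase t, H.Adj y z) (hB : B = insert a (A.erase v))
    (hcard : #(nbrsIn H B y) ≤ r + 1) (hK : IsNbrClique H r B y K)
    (hdisj : Disjoint K (core H r A a)) : s ∈ K := by
  have hmem {z : V} (hzv : z ≠ v) (hz : z ∈ (nbrsIn H A a).erase t) : z ∈ nbrsIn H B y := by
    simp [hB, hzv, (mem_nbrsIn.1 (mem_of_mem_erase hz)).1, hadj z hz]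
  have hs : s ∉ core H r A a := fun h ↦ (hf.mem_core_iff.1 h).2.1 rfl
  have hsub : insert s (K ∪ (core H r A a).erase v) ⊆ nbrsIn H B y := by
    refine insert_subset (hmem hvs.symm (mem_erase.2 ⟨hf.ne, hf.left_mem⟩))
      (union_subset hK.subset fun z hz ↦ ?_)
    obtain ⟨hzv, hz⟩ := mem_erase.1 hz
    exact hmem hzv (core_subset hf.isNbrClique_erase_right hz)
  by_contra hsK
  have hle := (card_le_card hsub).trans hcard
  have hcore := hf.card_core_add_one
  rw [card_insert_of_notMem (by simp [hsK, hs]),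
    card_union_of_disjoint (hdisj.mono_right (erase_subset _ _)), hK.card_eq,
    card_erase_of_mem hv] at hle
  omega

namespace IsOptimal

variable (hc : IsOptimal H o q c) (hdeg : ∀ v, H.degree v ≤ ∑ j, q j + 1) (ha : c a = none)

include hc hdeg ha

omit [DecidableEq V] in
lemma exists_isOptimal_uncolored (hat : ¬ IsTight H q c o a) (hy : c y ≠ some o)
    (hay : H.Adj a y) :
    ∃ c', IsOptimal H o q c' ∧ c' y = none ∧ colorClass c' o = colorClass c o := by
  classical
  match hj : c y with
  | none => exact ⟨c, hc, hj, rfl⟩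
  | some j =>
    have hjo : o ≠ j := by rintro rfl; exact hy hj
    have hjt := hc.isTight_of_not_isTight hdeg ha hjo hat
    exact ⟨kick c a y, hc.kick_of_isTight ha hjo.symm hj hay hjt,
      by rw [kick_apply_right, ha], colorClass_kick_of_ne ha hj hjo⟩

lemma card_nbrsIn_kick_le (hu : u ∈ core H (q o) (colorClass c o) a) :
    #(nbrsIn H (insert a ((colorClass c o).erase u)) u) ≤ q o + 1 := by
  rw [← colorClass_kick_self ha (mem_colorClass.1 (mem_of_mem_core hu))]
  exact (hc.kick_of_mem_core ha hu).card_nbrsIn_le hdeg (by rw [kick_apply_right, ha]) o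

lemma card_nbrsIn_sdiff_le_one (hu : u ∈ core H (q o) (colorClass c o) a)
    (hK : IsNbrClique H (q o) (colorClass c o) a K) : #(nbrsIn H (colorClass c o) u \ K) ≤ 1 :=
  CliqueFreeColoring.card_nbrsIn_sdiff_le_one (by simp [ha]) hK (core_subset hK hu)
    (hc.card_nbrsIn_kick_le hdeg ha hu)

lemma nbrsIn_kick_of_isFork (hf : IsFork H (q o) (colorClass c o) a s t)
    (hu : u ∈ core H (q o) (colorClass c o) a) :
    nbrsIn H (colorClass (kick c a u) o) u = insert a ((nbrsIn H (colorClass c o) a).erase u) := by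
  rw [colorClass_kick_self ha (mem_colorClass.1 (mem_of_mem_core hu))]
  exact hf.nbrsIn_exchange (by simp [ha]) hu (hc.card_nbrsIn_kick_le hdeg ha hu)

lemma exists_isOptimal_kick_uncolored (ht : t ∈ core H (q o) (colorClass c o) a)
    (htt : ¬ IsTight H q (kick c a t) o t) (hy : c y ≠ some o) (hya : y ≠ a) (hty : H.Adj t y) :
    ∃ c', IsOptimal H o q c' ∧ c' y = none ∧
      colorClass c' o = insert a ((colorClass c o).erase t) := by
  rw [← colorClass_kick_self ha (mem_colorClass.1 (mem_of_mem_core ht))]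
  refine (hc.kick_of_mem_core ha ht).exists_isOptimal_uncolored hdeg
    (by rw [kick_apply_right, ha]) htt ?_ hty
  rwa [kick_apply_of_ne hya hty.ne']

omit [DecidableEq V] in
lemma nbrsIn_subset_nbrsIn_of_not_adj (hq : 3 ≤ q o) (hat : IsTight H q c o a)
    (hu : u ∈ nbrsIn H (colorClass c o) a) (hy : c y ≠ some o) (hya : H.Adj y a)
    (hyadj : ∀ v ∈ nbrsIn H (colorClass c o) a, v ≠ u → H.Adj y v) (hyu : ¬ H.Adj y u)
    (ht : t ∈ nbrsIn H (colorClass c o) a) (htu : t ≠ u) :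
    nbrsIn H (colorClass c o) t ⊆ nbrsIn H (colorClass c o) a := by
  classical
  have hcore := hc.core_eq_nbrsIn ha hat
  have hD := hc.isNbrClique_nbrsIn ha hat
  set D := nbrsIn H (colorClass c o) a with hD_def
  have haA : a ∉ colorClass c o := by simp [ha]
  have hct : c t = some o := mem_colorClass.1 (hD.mem ht)
  by_cases htt : IsTight H q (kick c a t) o t
  · intro z hz
    rw [← hcore] at ht ⊢
    rw [IsTight, colorClass_kick_self ha hct] at htt
    refine mem_core_of_mem_nbrsIn_exchange ⟨D, hD⟩ ht htt ?_ ?_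
    · simp_all [(mem_nbrsIn.1 hz).2.ne']
    · rintro rfl
      exact haA (mem_nbrsIn.1 hz).1
  exfalso
  obtain ⟨c', hc', hy', hA'⟩ := hc.exists_isOptimal_kick_uncolored hdeg ha (hcore ▸ ht) htt hy
    hya.ne (hyadj t ht htu).symm
  have hbound := hc'.card_nbrsIn_le hdeg hy' o
  obtain ⟨K, hK⟩ := hc'.exists_isNbrClique hy' o
  rw [hA'] at hbound hK
  have haK := notMem_of_isNbrClique_exchange hat hu ht htu hyu hK
  have hdisj : Disjoint K D := disjoint_of_isNbrClique_exchange hD.card_eq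
    (fun s hs ↦ hc.card_nbrsIn_sdiff_le_one hdeg ha (hcore ▸ hs) hD) hu ht htu hyu hK haK
  have hsub : insert a ((D.erase u).erase t) ⊆
      nbrsIn H (insert a ((colorClass c o).erase t)) y := by
    refine insert_subset (by simp [hya]) fun w hw ↦ ?_
    obtain ⟨hwt, hwu, hw⟩ : w ≠ t ∧ w ≠ u ∧ w ∈ D := by simpa using hw
    exact mem_nbrsIn.2 ⟨mem_insert_of_mem (mem_erase.2 ⟨hwt, hD.mem hw⟩), hyadj w hw hwu⟩
  have hcard := card_le_card (union_subset hK.subset hsub)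
  rw [card_union_of_disjoint, hK.card_eq, card_insert_of_notMem (by simp [hD_def, ha]),
    card_erase_of_mem (mem_erase.2 ⟨htu, ht⟩), card_erase_of_mem hu, hD.card_eq] at hcard
  · omega
  · exact disjoint_insert_right.2
      ⟨haK, hdisj.mono_right ((erase_subset _ _).trans (erase_subset _ _))⟩

lemma nbrsIn_subset_nbrsIn_of_isFork (hf : IsFork H (q o) (colorClass c o) a s t)
    (hu : u ∈ core H (q o) (colorClass c o) a) :
    nbrsIn H (colorClass c o) u ⊆ nbrsIn H (colorClass c o) a := fun z hz ↦ by
  obtain ⟨hzo, huz⟩ := mem_nbrsIn.1 hz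
  have hza : z ≠ a := by rintro rfl; simp [ha] at hzo
  have hz' : z ∈ nbrsIn H (colorClass (kick c a u) o) u := by
    rw [colorClass_kick_self ha (mem_colorClass.1 (mem_of_mem_core hu))]
    exact mem_nbrsIn.2 ⟨mem_insert_of_mem (mem_erase.2 ⟨huz.ne', hzo⟩), huz⟩
  rw [hc.nbrsIn_kick_of_isFork hdeg ha hf hu] at hz'
  exact mem_of_mem_erase (mem_of_mem_insert_of_ne hz' hza)

lemma not_isTight_kick_of_isFork (hf : IsFork H (q o) (colorClass c o) a s t)
    (hu : u ∈ core H (q o) (colorClass c o) a) : ¬ IsTight H q (kick c a u) o u := by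
  rw [IsTight, hc.nbrsIn_kick_of_isFork hdeg ha hf hu, card_insert_of_notMem (by simp [ha]),
    card_erase_of_mem (core_subset_nbrsIn hu), hf.card_nbrsIn]
  omega

lemma exists_not_adj_of_isFork (hq : 3 ≤ q o) (hω : H.CliqueFree (q o + 2))
    (hf : IsFork H (q o) (colorClass c o) a s t) (hy : c y ≠ some o) (hya : y ≠ a) :
    ∃ v ∈ (nbrsIn H (colorClass c o) a).erase t, ¬ H.Adj y v := by
  by_contra! hadj
  have hclique := hf.isNbrClique_erase_right
  have hnya : ¬ H.Adj y a := not_adj_of_isNbrClique hω hclique hadj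
  have hcore {z : V} (hz : z ∈ core H (q o) (colorClass c o) a) : H.Adj y z :=
    hadj z (core_subset hclique hz)
  have hcard := hf.card_core_add_one
  obtain ⟨v, hv, v', hv', hvv'⟩ : ∃ v ∈ core H (q o) (colorClass c o) a,
      ∃ v' ∈ core H (q o) (colorClass c o) a, v ≠ v' := one_lt_card.1 (by omega)
  obtain ⟨c', hc', hy', hA'⟩ := hc.exists_isOptimal_kick_uncolored hdeg ha hv
    (hc.not_isTight_kick_of_isFork hdeg ha hf hv) hy hya (hcore hv).symm
  obtain ⟨-, hvs, -⟩ := hf.mem_core_iff.1 hv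
  obtain ⟨-, hv's, -⟩ := hf.mem_core_iff.1 hv'
  have hs : s ∈ (nbrsIn H (colorClass c o) a).erase t := mem_erase.2 ⟨hf.ne, hf.left_mem⟩
  have haK {K : Finset V} (hK : IsNbrClique H (q o) (colorClass c' o) y K) : a ∉ K :=
    fun h ↦ hnya (hK.adj h)
  have hdisj {K : Finset V} (hK : IsNbrClique H (q o) (colorClass c' o) y K) :
      Disjoint K (core H (q o) (colorClass c o) a) :=
    disjoint_core_of_isFork hf (fun z hz ↦ hc.nbrsIn_subset_nbrsIn_of_isFork hdeg ha hf hz) hv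
      (hA' ▸ hK) (haK hK)
  have hscore : s ∈ core H (q o) (colorClass c' o) y := by
    refine mem_core_of_forall (hc'.exists_isNbrClique hy' o) fun K hK ↦ ?_
    refine mem_of_disjoint_core_of_isFork hq hf hv hvs hadj hA' (hc'.card_nbrsIn_le hdeg hy' o) hK
      (hdisj hK)
  obtain ⟨K, hK⟩ := hc'.exists_isNbrClique hy' o
  refine (hc'.card_nbrsIn_sdiff_le_one hdeg hy' hscore hK).not_gt
    (one_lt_card.2 ⟨a, ?_, v', ?_, (adj_of_mem_core hv').ne⟩)
  · simp [hA', haK hK, (mem_nbrsIn.1 hf.left_mem).2.symm]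
  · have hsv' := hclique.pairwise_adj hs (core_subset hclique hv') hv's.symm
    simp [hA', hvv'.symm, mem_of_mem_core hv', disjoint_right.1 (hdisj hK) hv', hsv']

end IsOptimal

end LocalStructure

section Trees

variable {V ι : Type*} [Fintype V] [DecidableEq V] [Fintype ι] [DecidableEq ι] {H : SimpleGraph V}
  [DecidableRel H.Adj] {o : ι} {q : ι → ℕ}

/-- The kicks that are explored from an uncoloured vertex `a` under the colouring `c`, starting
from the colouring `c₀`: a vertex `v` of a class `j ≠ o` for which `a` is tight or, if `a` did not
have the colour `o` originally, a vertex `v` of the core of `a`. -/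
def IsKick (H : SimpleGraph V) [DecidableRel H.Adj] (o : ι) (q : ι → ℕ) (c₀ c : V → Option ι)
    (a v : V) : Prop :=
  (c₀ a ≠ some o ∧ v ∈ core H (q o) (colorClass c o) a) ∨
    ∃ j ≠ o, c v = some j ∧ H.Adj a v ∧ IsTight H q c j a

variable (H o q) in
/-- A breadth-first exploration of the sequences of kicks that start from an optimal colouring. The
node `i` carries the vertex that is uncoloured after the kicks leading from the root `0` to `i`, and
the colouring reached by them. Distinct nodes carry distinct vertices. -/
structure KickTree where
  size : ℕ
  vertex : Fin (size + 1) → V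
  parent : Fin (size + 1) → Fin (size + 1)
  coloring : Fin (size + 1) → V → Option ι
  isOptimal_zero : IsOptimal H o q (coloring 0)
  coloring_vertex_zero : coloring 0 (vertex 0) = none
  parent_lt : ∀ {i}, i ≠ 0 → parent i < i
  isKick : ∀ {i}, i ≠ 0 →
    IsKick H o q (coloring 0) (coloring (parent i)) (vertex (parent i)) (vertex i)
  coloring_eq : ∀ {i}, i ≠ 0 →
    coloring i = kick (coloring (parent i)) (vertex (parent i)) (vertex i)
  injective : Function.Injective vertex
  exists_vertex_eq_of_lt_parent : ∀ {i j v}, j ≠ 0 → i < parent j →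
    IsKick H o q (coloring 0) (coloring i) (vertex i) v → ∃ l < j, vertex l = v

namespace KickTree

variable (T : KickTree H o q)

/-- The nodes of the tree, ordered by the time of their discovery. -/
abbrev Node : Type := Fin (T.size + 1)

/-- No kick leads to a vertex outside the tree. -/
def IsComplete : Prop :=
  ∀ i v, IsKick H o q (T.coloring 0) (T.coloring i) (T.vertex i) v → ∃ l, T.vertex l = v

section Existence

variable {T} {m : T.Node} {v : V}

lemma exists_size_eq_add_one (hv : IsKick H o q (T.coloring 0) (T.coloring m) (T.vertex m) v)
    (hnew : ∀ l, T.vertex l ≠ v)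
    (hmin : ∀ i < m, ∀ w, IsKick H o q (T.coloring 0) (T.coloring i) (T.vertex i) w →
      ∃ l, T.vertex l = w) : ∃ T' : KickTree H o q, T'.size = T.size + 1 := by
  refine ⟨{
    size := T.size + 1
    vertex := Fin.snoc (α := fun _ ↦ V) T.vertex v
    parent := Fin.snoc (α := fun _ ↦ Fin (T.size + 2)) (fun i ↦ (T.parent i).castSucc) m.castSucc
    coloring := Fin.snoc (α := fun _ ↦ V → Option ι) T.coloring
      (kick (T.coloring m) (T.vertex m) v)
    isOptimal_zero := by rw [Fin.snoc_apply_zero]; exact T.isOptimal_zero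
    coloring_vertex_zero := by
      rw [Fin.snoc_apply_zero, Fin.snoc_apply_zero]; exact T.coloring_vertex_zero
    parent_lt := fun {i} ↦ by cases i using Fin.lastCases <;> simp +contextual [T.parent_lt]
    isKick := fun {i} ↦ by
      cases i using Fin.lastCases <;> simp +contextual [Fin.snoc_apply_zero, hv, T.isKick]
    coloring_eq := fun {i} ↦ by
      cases i using Fin.lastCases <;> simp +contextual [T.coloring_eq]
    injective := Fin.snoc_injective_iff.2 ⟨T.injective, fun ⟨l, hl⟩ ↦ hnew l hl⟩
    exists_vertex_eq_of_lt_parent := fun {i j w} ↦ ?_ }, rfl⟩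
  intro hj hij hw
  rw [Fin.snoc_apply_zero] at hw
  cases i using Fin.lastCases with
  | last => exact absurd (hij.trans_le (Fin.le_last _)) (lt_irrefl _)
  | cast i =>
    rw [Fin.snoc_castSucc, Fin.snoc_castSucc] at hw
    cases j using Fin.lastCases with
    | last =>
      rw [Fin.snoc_last, Fin.castSucc_lt_castSucc_iff] at hij
      obtain ⟨l, rfl⟩ := hmin i hij w hw
      exact ⟨l.castSucc, Fin.castSucc_lt_last l, by simp⟩
    | cast j =>
      rw [Fin.snoc_castSucc, Fin.castSucc_lt_castSucc_iff] at hij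
      obtain ⟨l, hl, rfl⟩ := T.exists_vertex_eq_of_lt_parent (by simpa using hj) hij hw
      exact ⟨l.castSucc, by simpa using hl, by simp⟩

lemma exists_size_eq_add_one_of_not_isComplete (hT : ¬ T.IsComplete) :
    ∃ T' : KickTree H o q, T'.size = T.size + 1 := by
  classical
  have hex : ∃ i v, IsKick H o q (T.coloring 0) (T.coloring i) (T.vertex i) v ∧
      ∀ l, T.vertex l ≠ v := by simpa [IsComplete] using hT
  obtain ⟨m, ⟨v, hv, hnew⟩, hmin⟩ := exists_minimal_of_wellFoundedLT _ hex
  refine exists_size_eq_add_one hv hnew fun i hi w hw ↦ ?_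
  by_contra! h
  exact hi.not_ge (hmin ⟨w, hw, h⟩ hi.le)

theorem exists_isComplete {c : V → Option ι} (hc : IsOptimal H o q c) (hv : c v = none) :
    ∃ T : KickTree H o q, T.IsComplete := by
  by_contra! hT
  have hsize (N : ℕ) : ∃ T : KickTree H o q, T.size = N := by
    induction N with
    | zero =>
      have hsub : Subsingleton (Fin (0 + 1)) := inferInstanceAs (Subsingleton (Fin 1))
      exact ⟨{
        size := 0
        vertex := fun _ ↦ v
        parent := id
        coloring := fun _ ↦ c
        isOptimal_zero := hc
        coloring_vertex_zero := hv
        parent_lt := fun h ↦ absurd (hsub.elim _ _) h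
        isKick := fun h ↦ absurd (hsub.elim _ _) h
        coloring_eq := fun h ↦ absurd (hsub.elim _ _) h
        injective := fun _ _ _ ↦ hsub.elim _ _
        exists_vertex_eq_of_lt_parent := fun h ↦ absurd (hsub.elim _ _) h }, rfl⟩
    | succ N ih =>
      obtain ⟨T, rfl⟩ := ih
      exact exists_size_eq_add_one_of_not_isComplete (hT T)
  obtain ⟨T, hT⟩ := hsize (Fintype.card V)
  have := Fintype.card_le_of_injective _ T.injective
  rw [Fintype.card_fin] at this
  omega

end Existence

section Ancestors

/-- The node `i` is reached from the node `j` by a sequence of kicks, possibly empty. -/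
def IsAncestor : T.Node → T.Node → Prop := Relation.ReflTransGen fun j i ↦ i ≠ 0 ∧ T.parent i = j

variable {T} {a b g i j l : T.Node}

lemma isAncestor_parent (hi : i ≠ 0) : T.IsAncestor (T.parent i) i := .single ⟨hi, rfl⟩

namespace IsAncestor

lemma refl (i : T.Node) : T.IsAncestor i i := Relation.ReflTransGen.refl

lemma trans (h : T.IsAncestor a b) (h' : T.IsAncestor b i) : T.IsAncestor a i :=
  Relation.ReflTransGen.trans h h'

lemma le (h : T.IsAncestor j i) : j ≤ i := by
  induction h with
  | refl => exact le_rfl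
  | tail _ h ih =>
    obtain ⟨h0, rfl⟩ := h
    exact ih.trans (T.parent_lt h0).le

lemma of_ne (h : T.IsAncestor j i) (hne : j ≠ i) : i ≠ 0 ∧ T.IsAncestor j (T.parent i) := by
  obtain rfl | ⟨l, hl, h0, rfl⟩ := h.cases_tail
  exacts [absurd rfl hne, ⟨h0, hl⟩]

lemma le_parent (h : T.IsAncestor j i) (hne : j ≠ i) : j ≤ T.parent i := (h.of_ne hne).2.le

lemma exists_child (h : T.IsAncestor j i) (hne : j ≠ i) :
    ∃ l, l ≠ 0 ∧ T.parent l = j ∧ T.IsAncestor l i := by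
  obtain rfl | ⟨l, ⟨h0, hl⟩, hli⟩ := h.cases_head
  exacts [absurd rfl hne, ⟨l, h0, hl, hli⟩]

lemma of_le (ha : T.IsAncestor a i) (hb : T.IsAncestor b i) (hab : a ≤ b) : T.IsAncestor a b := by
  induction hb using Relation.ReflTransGen.head_induction_on with
  | refl => exact ha
  | head h _ ih =>
    obtain ⟨h0, rfl⟩ := h
    exact ((ih (hab.trans (T.parent_lt h0).le)).of_ne (hab.trans_lt (T.parent_lt h0)).ne).2

end IsAncestor

end Ancestors

section Colorings

/-- The class of the distinguished colour `o` under the colouring of the node `i`; for short, the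
red vertices. -/
def red (i : T.Node) : Finset V := colorClass (T.coloring i) o

/-- The red neighbours of the vertex of the node `i`, under the colouring of this node. -/
def nbrs (i : T.Node) : Finset V := nbrsIn H (T.red i) (T.vertex i)

/-- The core of the vertex of the node `i` in the red class of the colouring of this node. -/
def redCore (i : T.Node) : Finset V := core H (q o) (T.red i) (T.vertex i)

/-- The vertex of the node `i` is tight in the class `j` of the colouring of this node. -/
def IsTightAt (j : ι) (i : T.Node) : Prop := IsTight H q (T.coloring i) j (T.vertex i)

variable {T} {i l g g' u y : T.Node} {j : ι} {v v' : V}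

lemma mem_red : v ∈ T.red i ↔ T.coloring i v = some o := mem_colorClass

lemma mem_nbrs : v ∈ T.nbrs i ↔ v ∈ T.red i ∧ H.Adj (T.vertex i) v := mem_nbrsIn

lemma isOptimal_and_coloring_vertex (i : T.Node) :
    IsOptimal H o q (T.coloring i) ∧ T.coloring i (T.vertex i) = none := by
  induction i using WellFoundedLT.induction with
  | ind i ih =>
    rcases eq_or_ne i 0 with rfl | h0
    · exact ⟨T.isOptimal_zero, T.coloring_vertex_zero⟩
    obtain ⟨hc, ha⟩ := ih _ (T.parent_lt h0)
    rw [T.coloring_eq h0]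
    refine ⟨?_, by rw [kick_apply_right, ha]⟩
    rcases T.isKick h0 with ⟨-, hv⟩ | ⟨j, hj, hv, hadj, ht⟩
    · exact hc.kick_of_mem_core ha hv
    · exact hc.kick_of_isTight ha hj hv hadj ht

lemma isOptimal (i : T.Node) : IsOptimal H o q (T.coloring i) :=
  (isOptimal_and_coloring_vertex i).1

lemma coloring_vertex (i : T.Node) : T.coloring i (T.vertex i) = none :=
  (isOptimal_and_coloring_vertex i).2

lemma vertex_notMem_red (i : T.Node) : T.vertex i ∉ T.red i := by
  simp [mem_red, coloring_vertex]

lemma coloring_eq_of_forall (h : ∀ l, T.IsAncestor l i → T.vertex l ≠ v) :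
    T.coloring i v = T.coloring 0 v := by
  induction i using WellFoundedLT.induction with
  | ind i ih =>
    rcases eq_or_ne i 0 with rfl | h0
    · rfl
    rw [T.coloring_eq h0, kick_apply_of_ne (h _ (isAncestor_parent h0)).symm (h i (.refl i)).symm]
    exact ih _ (T.parent_lt h0) fun l hl ↦ h l (hl.trans (isAncestor_parent h0))

lemma coloring_vertex_of_lt (h : i < l) : T.coloring i (T.vertex l) = T.coloring 0 (T.vertex l) :=
  coloring_eq_of_forall fun _ hm he ↦ (hm.le.trans_lt h).ne (T.injective he)

lemma vertex_mem_red_of_lt (h : i < l) : T.vertex l ∈ T.red i ↔ T.vertex l ∈ T.red 0 := by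
  rw [mem_red, mem_red, coloring_vertex_of_lt h]

lemma coloring_vertex_parent (hl : l ≠ 0) (h : T.IsAncestor l i) :
    T.coloring i (T.vertex (T.parent l)) = T.coloring 0 (T.vertex l) := by
  induction h with
  | refl => rw [T.coloring_eq hl, kick_apply_left, coloring_vertex_of_lt (T.parent_lt hl)]
  | tail hlm h ih =>
    obtain ⟨h0, rfl⟩ := h
    have hlt := (T.parent_lt hl).trans_le (IsAncestor.le hlm)
    rw [T.coloring_eq h0, kick_apply_of_ne, ih] <;> refine fun he ↦ ne_of_lt ?_ (T.injective he)
    exacts [hlt, hlt.trans (T.parent_lt h0)]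

lemma vertex_parent_mem_red (hl : l ≠ 0) (h : T.IsAncestor l i) :
    T.vertex (T.parent l) ∈ T.red i ↔ T.vertex l ∈ T.red 0 := by
  rw [mem_red, mem_red, coloring_vertex_parent hl h]

lemma ne_zero_of_mem_red (h : T.vertex i ∈ T.red 0) : i ≠ 0 := by
  rintro rfl
  exact vertex_notMem_red 0 h

lemma parent_of_mem_red (h : T.vertex i ∈ T.red 0) :
    T.vertex (T.parent i) ∉ T.red 0 ∧ T.vertex i ∈ T.redCore (T.parent i) := by
  have h0 := ne_zero_of_mem_red h
  rcases T.isKick h0 with hk | ⟨j, hj, hv, -, -⟩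
  · exact ⟨fun hp ↦ hk.1 (mem_red.1 hp), hk.2⟩
  · rw [coloring_vertex_of_lt (T.parent_lt h0), mem_red.1 h] at hv
    exact absurd (Option.some_injective _ hv).symm hj

lemma exists_isTightAt (h0 : i ≠ 0) (h : T.vertex i ∉ T.red 0) :
    ∃ j ≠ o, T.coloring 0 (T.vertex i) = some j ∧ H.Adj (T.vertex (T.parent i)) (T.vertex i) ∧
      T.IsTightAt j (T.parent i) ∧ T.IsTightAt j i := by
  have hlt := T.parent_lt h0
  rcases T.isKick h0 with hk | ⟨j, hj, hv, hadj, ht⟩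
  · exact absurd ((vertex_mem_red_of_lt hlt).1 (mem_of_mem_core hk.2)) h
  · refine ⟨j, hj, coloring_vertex_of_lt hlt ▸ hv, hadj, ht, ?_⟩
    rw [IsTightAt, T.coloring_eq h0]
    exact (isOptimal _).isTight_kick (coloring_vertex _) hj hv hadj ht

lemma vertex_notMem_red_of_isAncestor (h : T.IsAncestor g y) (hg : T.vertex g ∈ T.red 0) :
    T.vertex g ∉ T.red y := by
  rcases eq_or_ne g y with rfl | hne
  · exact vertex_notMem_red g
  obtain ⟨l, h0, rfl, hl⟩ := h.exists_child hne
  rw [vertex_parent_mem_red h0 hl]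
  exact fun h ↦ (parent_of_mem_red h).1 hg

lemma exists_isAncestor_of_notMem_red (hv : v ∈ T.red 0) (h : v ∉ T.red y) :
    ∃ g, T.IsAncestor g y ∧ T.vertex g = v := by
  by_contra! hn
  rw [mem_red] at hv h
  exact h (by rw [coloring_eq_of_forall hn, hv])

lemma exists_isAncestor_of_mem_red (hv : v ∉ T.red 0) (h : v ∈ T.red y) :
    ∃ u, T.IsAncestor u y ∧ T.vertex u ∈ T.red 0 ∧ T.vertex (T.parent u) = v := by
  by_cases hn : ∀ l, T.IsAncestor l y → T.vertex l ≠ v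
  · rw [mem_red] at hv h
    exact absurd (coloring_eq_of_forall hn ▸ h) hv
  push Not at hn
  obtain ⟨l, hl, rfl⟩ := hn
  obtain ⟨u, h0, rfl, hu⟩ := hl.exists_child (by rintro rfl; exact vertex_notMem_red l h)
  exact ⟨u, hu, (vertex_parent_mem_red h0 hu).1 h, rfl⟩

lemma mem_red_of_isAncestor (h : T.IsAncestor i y) (hv : v ∈ T.red 0) (hvy : v ∈ T.red y) :
    v ∈ T.red i := by
  by_contra hvi
  obtain ⟨l, hl, rfl⟩ := exists_isAncestor_of_notMem_red hv hvi
  exact vertex_notMem_red_of_isAncestor (hl.trans h) hv hvy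

lemma mem_red_of_isAncestor_of_notMem (h : T.IsAncestor i y) (hv : v ∉ T.red 0)
    (hvi : v ∈ T.red i) : v ∈ T.red y := by
  obtain ⟨u, hu, hured, rfl⟩ := exists_isAncestor_of_mem_red hv hvi
  rwa [vertex_parent_mem_red (ne_zero_of_mem_red hured) (hu.trans h)]

lemma exists_isNbrClique (y : T.Node) : ∃ K, IsNbrClique H (q o) (T.red y) (T.vertex y) K :=
  (isOptimal y).exists_isNbrClique (coloring_vertex y) o

lemma isNbrClique_nbrs (h : T.IsTightAt o i) :
    IsNbrClique H (q o) (T.red i) (T.vertex i) (T.nbrs i) :=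
  (isOptimal i).isNbrClique_nbrsIn (coloring_vertex i) h

lemma redCore_eq_nbrs (h : T.IsTightAt o i) : T.redCore i = T.nbrs i :=
  (isOptimal i).core_eq_nbrsIn (coloring_vertex i) h

lemma mem_redCore_parent (hg : T.vertex g ∈ T.red 0) (ht : T.IsTightAt o g) (hv : v ∈ T.nbrs g)
    (hne : v ≠ T.vertex (T.parent g)) : v ∈ T.redCore (T.parent g) := by
  obtain ⟨-, hcore⟩ := parent_of_mem_red hg
  rw [nbrs, red, T.coloring_eq (ne_zero_of_mem_red hg)] at hv
  rw [IsTightAt, IsTight, T.coloring_eq (ne_zero_of_mem_red hg)] at ht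
  rw [colorClass_kick_self (coloring_vertex _) (mem_red.1 (mem_of_mem_core hcore))] at hv ht
  exact mem_core_of_mem_nbrsIn_exchange (exists_isNbrClique _) hcore ht hv hne

lemma card_le_card_filter_notMem_red_add_one {K L : Finset V}
    (hdeg : ∀ v, H.degree v ≤ ∑ j, q j + 1) (hK : IsNbrClique H (q o) (T.red y) (T.vertex y) K)
    (hL : ∀ v ∈ L, H.Adj (T.vertex y) v)
    (hdisj : Disjoint K L) : #L ≤ #{v ∈ L | v ∉ T.red y} + 1 := by
  have hsub : K ∪ {v ∈ L | v ∈ T.red y} ⊆ T.nbrs y := by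
    refine union_subset hK.subset fun v hv ↦ ?_
    obtain ⟨hvL, hv⟩ := mem_filter.1 hv
    exact mem_nbrs.2 ⟨hv, hL v hvL⟩
  have hle := (card_le_card hsub).trans ((isOptimal y).card_nbrsIn_le hdeg (coloring_vertex y) o)
  rw [card_union_of_disjoint (hdisj.mono_right (filter_subset _ _)), hK.card_eq] at hle
  have := card_filter_add_card_filter_not (s := L) (fun v ↦ v ∈ T.red y)
  omega

end Colorings

section BreadthFirst

variable {T} {b g g' i l u u' y : T.Node} {j : ι} {v v' : V} {K : Finset V}

lemma parent_le_of_isKick (hl : l ≠ 0)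
    (h : IsKick H o q (T.coloring 0) (T.coloring i) (T.vertex i) (T.vertex l)) :
    T.parent l ≤ i := by
  by_contra! hlt
  obtain ⟨m, hm, he⟩ := T.exists_vertex_eq_of_lt_parent hl hlt h
  exact hm.ne (T.injective he)

lemma parent_le_of_mem_redCore (hi : T.vertex i ∉ T.red 0) (hu : T.vertex u ∈ T.red 0)
    (h : T.vertex u ∈ T.redCore i) : T.parent u ≤ i :=
  parent_le_of_isKick (ne_zero_of_mem_red hu) (.inl ⟨fun h ↦ hi (mem_red.2 h), h⟩)

lemma exists_isNbrClique_notMem (hi : T.vertex i ∉ T.red 0) (hu : T.vertex u ∈ T.red 0)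
    (hlt : i < T.parent u) :
    ∃ K, IsNbrClique H (q o) (T.red i) (T.vertex i) K ∧ T.vertex u ∉ K := by
  by_contra! h
  exact (parent_le_of_mem_redCore hi hu (mem_core_of_forall (exists_isNbrClique _) h)).not_gt hlt

lemma parent_mono (hi : i ≠ 0) (hl : l ≠ 0) (h : i ≤ l) : T.parent i ≤ T.parent l := by
  by_contra! hlt
  obtain ⟨m, hm, he⟩ := T.exists_vertex_eq_of_lt_parent hi hlt (T.isKick hl)
  exact (hm.trans_le h).ne (T.injective he)

lemma not_isTightAt_of_lt_parent (hy : y ≠ 0) (hi : i < T.parent y)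
    (hadj : H.Adj (T.vertex i) (T.vertex y)) (hj : j ≠ o)
    (hc : T.coloring 0 (T.vertex y) = some j) : ¬ T.IsTightAt j i := fun ht ↦ by
  have hc' := coloring_vertex_of_lt (hi.trans (T.parent_lt hy))
  exact (parent_le_of_isKick hy (.inr ⟨j, hj, hc'.trans hc, hadj, ht⟩)).not_gt hi

lemma le_parent_of_isAncestor (hb : T.vertex b ∉ T.red 0) (hby : b ≤ y) (hub : T.IsAncestor u b)
    (hu : T.vertex u ∈ T.red 0) : y ≠ 0 ∧ u ≤ T.parent y := by
  obtain ⟨hb0, hub⟩ := hub.of_ne (by rintro rfl; exact hb hu)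
  have hy0 : y ≠ 0 := Fin.ne_zero_of_lt ((Fin.pos_of_ne_zero hb0).trans_le hby)
  exact ⟨hy0, hub.le.trans (parent_mono hb0 hy0 hby)⟩

section DegreeBound

variable (hdeg : ∀ v, H.degree v ≤ ∑ j, q j + 1)
include hdeg

lemma isTightAt_of_not_isTightAt {i : T.Node} {j j' : ι} (hj : j ≠ j') (h : ¬ T.IsTightAt j i) :
    T.IsTightAt j' i :=
  (isOptimal i).isTight_of_not_isTight hdeg (coloring_vertex i) hj h

lemma isTightAt_of_lt_parent (hy0 : y ≠ 0) (hi : i < T.parent y)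
    (hadj : H.Adj (T.vertex i) (T.vertex y)) (hy : T.vertex y ∉ T.red 0) : T.IsTightAt o i := by
  obtain ⟨j, hj, hc, -⟩ := exists_isTightAt hy0 hy
  exact isTightAt_of_not_isTightAt hdeg hj (not_isTightAt_of_lt_parent hy0 hi hadj hj hc)

lemma not_adj_of_isAncestor_of_lt (hy : T.vertex y ∉ T.red 0) (hg : T.IsAncestor g y)
    (hg' : T.IsAncestor g' y) (hgr : T.vertex g ∈ T.red 0) (hgr' : T.vertex g' ∈ T.red 0)
    (hlt : g < g') (hadj : H.Adj (T.vertex g) (T.vertex y)) :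
    ¬ H.Adj (T.vertex g) (T.vertex g') := fun h ↦ by
  obtain ⟨hy0, hle⟩ := le_parent_of_isAncestor hy le_rfl hg' hgr'
  have ht := isTightAt_of_lt_parent hdeg hy0 (hlt.trans_le hle) hadj hy
  have hmem := mem_redCore_parent hgr ht (mem_nbrs.2 ⟨(vertex_mem_red_of_lt hlt).2 hgr', h⟩)
    fun he ↦ ((T.parent_lt (ne_zero_of_mem_red hgr)).trans hlt).ne (T.injective he.symm)
  have hle' := parent_le_of_mem_redCore (parent_of_mem_red hgr).1 hgr' hmem
  have hgg' := (hg.of_le hg' hlt.le).le_parent hlt.ne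
  exact (T.parent_lt (ne_zero_of_mem_red hgr)).not_ge (hgg'.trans hle')

lemma not_adj_of_notMem_red (hy : T.vertex y ∉ T.red 0) (hv : v ∈ T.red 0) (hv' : v' ∈ T.red 0)
    (hvy : v ∉ T.red y) (hvy' : v' ∉ T.red y) (hadj : H.Adj (T.vertex y) v)
    (hadj' : H.Adj (T.vertex y) v') : ¬ H.Adj v v' := by
  obtain ⟨g, hg, rfl⟩ := exists_isAncestor_of_notMem_red hv hvy
  obtain ⟨g', hg', rfl⟩ := exists_isAncestor_of_notMem_red hv' hvy'
  rcases lt_trichotomy g g' with hlt | rfl | hlt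
  · exact not_adj_of_isAncestor_of_lt hdeg hy hg hg' hv hv' hlt hadj.symm
  · exact H.irrefl
  · exact fun h ↦ not_adj_of_isAncestor_of_lt hdeg hy hg' hg hv' hv hlt hadj'.symm h.symm

lemma card_le_one_of_forall_notMem_red {L : Finset V} (hy : T.vertex y ∉ T.red 0)
    (hclique : H.IsClique L) (hadj : ∀ v ∈ L, H.Adj (T.vertex y) v)
    (hL : ∀ v ∈ L, v ∈ T.red 0 ∧ v ∉ T.red y) : #L ≤ 1 := by
  refine card_le_one.2 fun v hv w hw ↦ ?_
  by_contra hne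
  exact not_adj_of_notMem_red hdeg hy (hL v hv).1 (hL w hw).1 (hL v hv).2 (hL w hw).2 (hadj v hv)
    (hadj w hw) (hclique hv hw hne)

lemma not_adj_of_parent_lt_parent (hb : T.vertex b ∉ T.red 0) (hby : b ≤ y)
    (hy : T.vertex y ∉ T.red 0) (hub : T.IsAncestor u b) (hub' : T.IsAncestor u' b)
    (hu : T.vertex u ∈ T.red 0) (hu' : T.vertex u' ∈ T.red 0) (hlt : T.parent u < T.parent u')
    (hadj : H.Adj (T.vertex (T.parent u)) (T.vertex y))
    (hadj' : H.Adj (T.vertex (T.parent u')) (T.vertex y)) :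
    ¬ H.Adj (T.vertex (T.parent u)) (T.vertex (T.parent u')) := fun h ↦ by
  obtain ⟨hu0, hu0'⟩ := And.intro (ne_zero_of_mem_red hu) (ne_zero_of_mem_red hu')
  obtain ⟨hy0, hle⟩ := le_parent_of_isAncestor hb hby hub' hu'
  have hlt_y' := (T.parent_lt hu0').trans_le hle
  have hred := (parent_of_mem_red hu').1
  have hub_parent := (isAncestor_parent hu0').trans hub'
  have hle_parent : u ≤ T.parent u' := by
    by_contra! hlt'
    exact ((hub_parent.of_le hub hlt'.le).le_parent hlt'.ne).not_gt hlt
  obtain ⟨hp0, hup⟩ := (hub.of_le hub_parent hle_parent).of_ne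
    (by rintro rfl; exact hred hu)
  obtain ⟨i, hi, hci, -, -, ht⟩ := exists_isTightAt hp0 hred
  obtain ⟨j, hj, hcj, -⟩ := exists_isTightAt hy0 hy
  have hi' := not_isTightAt_of_lt_parent hp0 ((T.parent_lt hu0).trans_le hup.le) h hi hci
  have hj' := not_isTightAt_of_lt_parent hy0 (hlt.trans hlt_y') hadj hj hcj
  obtain rfl : i = j := by
    by_contra hij
    exact hj' (isTightAt_of_not_isTightAt hdeg hij hi')
  exact not_isTightAt_of_lt_parent hy0 hlt_y' hadj' hi hcj ht

end DegreeBound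

end BreadthFirst

section Invasion

variable {T} {b u y : T.Node} {K : Finset V} {t v : V}

/-- Under the colouring of `b`, a `q o`-clique `K` of red neighbours of `y`, where `b ≤ y`, contains
the vertex of `parent u`, which was not red originally: it has replaced the red vertex `u` on the
way to `b`. -/
structure IsInvaded (T : KickTree H o q) (b y u : T.Node) (K : Finset V) : Prop where
  notMem_red : T.vertex b ∉ T.red 0
  le : b ≤ y
  notMem_red' : T.vertex y ∉ T.red 0
  isAncestor : T.IsAncestor u b
  mem_red : T.vertex u ∈ T.red 0
  isNbrClique : IsNbrClique H (q o) (T.red b) (T.vertex y) K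
  mem : T.vertex (T.parent u) ∈ K

namespace IsInvaded

variable (h : T.IsInvaded b y u K)
include h

lemma ne_zero : u ≠ 0 := ne_zero_of_mem_red h.mem_red

lemma isAncestor_parent : T.IsAncestor (T.parent u) b :=
  (KickTree.isAncestor_parent h.ne_zero).trans h.isAncestor

lemma parent_lt_parent : T.parent u < T.parent y :=
  (T.parent_lt h.ne_zero).trans_le
    (le_parent_of_isAncestor h.notMem_red h.le h.isAncestor h.mem_red).2

lemma ne_zero' : y ≠ 0 := (le_parent_of_isAncestor h.notMem_red h.le h.isAncestor h.mem_red).1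

lemma parent_lt : T.parent u < y := h.parent_lt_parent.trans (T.parent_lt h.ne_zero')

lemma notMem_red_parent : T.vertex y ∉ T.red (T.parent u) :=
  fun hy ↦ h.notMem_red' ((vertex_mem_red_of_lt h.parent_lt).1 hy)

lemma adj : H.Adj (T.vertex (T.parent u)) (T.vertex y) := (h.isNbrClique.adj h.mem).symm

lemma mem_nbrs : T.vertex u ∈ T.nbrs (T.parent u) :=
  core_subset_nbrsIn (parent_of_mem_red h.mem_red).2

lemma vertex_notMem : T.vertex u ∉ K := fun hu ↦
  vertex_notMem_red_of_isAncestor h.isAncestor h.mem_red (h.isNbrClique.mem hu)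

variable (hdeg : ∀ v, H.degree v ≤ ∑ j, q j + 1)
include hdeg

lemma isTightAt : T.IsTightAt o (T.parent u) :=
  isTightAt_of_lt_parent hdeg h.ne_zero' h.parent_lt_parent h.adj h.notMem_red'

lemma mem_red_zero (hv : v ∈ K) (hne : v ≠ T.vertex (T.parent u)) : v ∈ T.red 0 := by
  by_contra hv0
  obtain ⟨w, hw, hwr, rfl⟩ := exists_isAncestor_of_mem_red hv0 (h.isNbrClique.mem hv)
  have hadj := (h.isNbrClique.adj hv).symm
  have hadj' := h.isNbrClique.pairwise_adj hv h.mem hne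
  rcases lt_trichotomy (T.parent u) (T.parent w) with hlt | heq | hlt
  · exact not_adj_of_parent_lt_parent hdeg h.notMem_red h.le h.notMem_red' h.isAncestor hw h.mem_red
      hwr hlt h.adj hadj hadj'.symm
  · exact hne (heq ▸ rfl)
  · exact not_adj_of_parent_lt_parent hdeg h.notMem_red h.le h.notMem_red' hw h.isAncestor hwr
      h.mem_red hlt hadj h.adj hadj'

lemma erase_eq :
    K.erase (T.vertex (T.parent u)) = (T.nbrs (T.parent u)).erase (T.vertex u) := by
  refine eq_of_subset_of_card_le (fun v hv ↦ ?_) ?_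
  · obtain ⟨hne, hv⟩ := mem_erase.1 hv
    have hvu : v ≠ T.vertex u := by rintro rfl; exact h.vertex_notMem hv
    refine mem_erase.2 ⟨hvu, KickTree.mem_nbrs.2 ⟨?_, h.isNbrClique.pairwise_adj h.mem hv hne.symm⟩⟩
    exact mem_red_of_isAncestor h.isAncestor_parent (h.mem_red_zero hdeg hv hne)
      (h.isNbrClique.mem hv)
  · rw [card_erase_of_mem h.mem, card_erase_of_mem h.mem_nbrs, h.isNbrClique.card_eq,
      (isNbrClique_nbrs (h.isTightAt hdeg)).card_eq]

lemma mem_of_mem_nbrs (hv : v ∈ T.nbrs (T.parent u)) (hne : v ≠ T.vertex u) : v ∈ K :=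
  mem_of_mem_erase (h.erase_eq hdeg ▸ mem_erase.2 ⟨hne, hv⟩)

lemma mem_nbrs_of_mem (hv : v ∈ K) (hne : v ≠ T.vertex (T.parent u)) :
    v ∈ T.nbrs (T.parent u) :=
  mem_of_mem_erase (h.erase_eq hdeg ▸ mem_erase.2 ⟨hne, hv⟩)

lemma not_adj (hω : H.CliqueFree (q o + 2)) : ¬ H.Adj (T.vertex y) (T.vertex u) := by
  refine not_adj_of_isNbrClique (A := univ) hω ⟨fun v hv ↦ ?_, h.isNbrClique.isNClique⟩
    fun v hv ↦ h.isNbrClique.adj hv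
  refine mem_nbrsIn.2 ⟨mem_univ v, ?_⟩
  rcases eq_or_ne v (T.vertex (T.parent u)) with rfl | hne
  · exact (KickTree.mem_nbrs.1 h.mem_nbrs).2.symm
  · exact (isNbrClique_nbrs (h.isTightAt hdeg)).pairwise_adj h.mem_nbrs
      (h.mem_nbrs_of_mem hdeg hv hne) (fun he ↦ h.vertex_notMem (he ▸ hv))

lemma nbrsIn_subset_nbrs (hq : 3 ≤ q o) (hω : H.CliqueFree (q o + 2))
    (ht : t ∈ T.nbrs (T.parent u)) (htu : t ≠ T.vertex u) :
    nbrsIn H (T.red (T.parent u)) t ⊆ T.nbrs (T.parent u) :=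
  (isOptimal _).nbrsIn_subset_nbrsIn_of_not_adj hdeg (coloring_vertex _) hq (h.isTightAt hdeg)
    h.mem_nbrs (fun hy ↦ h.notMem_red_parent (KickTree.mem_red.2 hy)) h.adj.symm
    (fun _ hv hvu ↦ h.isNbrClique.adj (h.mem_of_mem_nbrs hdeg hv hvu)) (h.not_adj hdeg hω) ht htu

end IsInvaded

end Invasion

section Twins

variable {T} {a b g u y : T.Node} {K L : Finset V} {f v w z : V}

variable (hdeg : ∀ v, H.degree v ≤ ∑ j, q j + 1) (hq : 3 ≤ q o)
include hdeg hq

lemma exists_notMem_red (hy : T.vertex y ∉ T.red 0)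
    (hK : IsNbrClique H (q o) (T.red y) (T.vertex y) K) (hL : H.IsNClique (q o) L)
    (hadj : ∀ v ∈ L, H.Adj (T.vertex y) v) (hdisj : Disjoint K L) :
    ∃ v ∈ L, v ∉ T.red y ∧ v ∉ T.red 0 := by
  by_contra! hred
  have hle := card_le_card_filter_notMem_red_add_one hdeg hK hadj hdisj
  have hone : #{v ∈ L | v ∉ T.red y} ≤ 1 := by
    refine card_le_one_of_forall_notMem_red hdeg hy
      (hL.isClique.subset (coe_subset.2 (filter_subset _ _)))
      (fun v hv ↦ hadj v (mem_filter.1 hv).1) fun v hv ↦ ?_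
    obtain ⟨hvL, hvy⟩ := mem_filter.1 hv
    exact ⟨hred v hvL hvy, hvy⟩
  rw [hL.card_eq] at hle
  omega

variable (hω : H.CliqueFree (q o + 2))
include hω

lemma not_isInvaded_self : ¬ T.IsInvaded y y u K := fun h ↦ by
  have hu := h.mem_nbrs
  have hyu := h.not_adj hdeg hω
  have htight := h.isTightAt hdeg
  have hD := isNbrClique_nbrs htight
  have hcore {s : V} (hs : s ∈ T.nbrs (T.parent u)) : s ∈ T.redCore (T.parent u) :=
    redCore_eq_nbrs htight ▸ hs
  obtain ⟨t, ht, htu⟩ := exists_mem_ne (hD.card_eq.symm ▸ (by omega : 1 < q o)) (T.vertex u)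
  obtain ⟨L, hL⟩ := (isOptimal _).exists_isNbrClique_exchange (coloring_vertex (T.parent u))
    (hcore ht) (fun hy ↦ h.notMem_red_parent (mem_red.2 hy)) h.adj.ne'
  have hpL : T.vertex (T.parent u) ∉ L := notMem_of_isNbrClique_exchange htight hu ht htu hyu hL
  have hdisj : Disjoint L (T.nbrs (T.parent u)) := disjoint_of_isNbrClique_exchange hD.card_eq
    (fun s hs ↦ (isOptimal _).card_nbrsIn_sdiff_le_one hdeg (coloring_vertex _) (hcore hs) hD)
    hu ht htu hyu hL hpL
  have hKL : Disjoint K L := disjoint_left.2 fun z hzK hzL ↦ by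
    have hzp : z ≠ T.vertex (T.parent u) := by rintro rfl; exact hpL hzL
    exact disjoint_left.1 hdisj hzL (h.mem_nbrs_of_mem hdeg hzK hzp)
  obtain ⟨v, hvL, hvy, hv⟩ := exists_notMem_red hdeg hq h.notMem_red h.isNbrClique hL.isNClique
    (fun v ↦ hL.adj) hKL
  have hvp : v ≠ T.vertex (T.parent u) := by rintro rfl; exact hpL hvL
  exact hvy (mem_red_of_isAncestor_of_notMem h.isAncestor_parent hv
    (mem_of_mem_erase (mem_of_mem_insert_of_ne (hL.mem hvL) hvp)))

lemma mem_red_zero_of_mem_isNbrClique (hy : T.vertex y ∉ T.red 0)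
    (hK : IsNbrClique H (q o) (T.red y) (T.vertex y) K) (hv : v ∈ K) : v ∈ T.red 0 := by
  by_contra hv0
  obtain ⟨u, hu, hured, rfl⟩ := exists_isAncestor_of_mem_red hv0 (hK.mem hv)
  exact not_isInvaded_self hdeg hq hω ⟨hy, le_rfl, hy, hu, hured, hK, hv⟩

namespace IsInvaded

variable (h : T.IsInvaded b y u K)
include h

lemma mem_nbrs_of_adj_of_adj (hf : f ∈ K.erase (T.vertex (T.parent u)))
    (hg : v ∈ K.erase (T.vertex (T.parent u))) (hfg : f ≠ v) (hz : z ∈ T.red 0) (hzf : H.Adj z f)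
    (hzg : H.Adj z v) : z ∈ T.nbrs (T.parent u) := by
  have hsub {w : V} (hw : w ∈ K.erase (T.vertex (T.parent u))) :
      nbrsIn H (T.red (T.parent u)) w ⊆ T.nbrs (T.parent u) := by
    obtain ⟨hwp, hwK⟩ := mem_erase.1 hw
    refine h.nbrsIn_subset_nbrs hdeg hq hω (h.mem_nbrs_of_mem hdeg hwK hwp) ?_
    rintro rfl
    exact h.vertex_notMem hwK
  have hmem {w : V} (hw : w ∈ K.erase (T.vertex (T.parent u))) :
      w ∈ T.red 0 ∧ w ∈ T.red (T.parent u) := by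
    obtain ⟨hwp, hwK⟩ := mem_erase.1 hw
    exact ⟨h.mem_red_zero hdeg hwK hwp, (mem_nbrsIn.1 (h.mem_nbrs_of_mem hdeg hwK hwp)).1⟩
  by_contra hzN
  have hzp : z ∉ T.red (T.parent u) := fun hzp ↦ hzN (hsub hf (mem_nbrsIn.2 ⟨hzp, hzf.symm⟩))
  obtain ⟨e, he, rfl⟩ := exists_isAncestor_of_notMem_red hz hzp
  obtain ⟨hpe, hecore⟩ := parent_of_mem_red hz
  have he0 := ne_zero_of_mem_red hz
  obtain ⟨M, hM⟩ := exists_isNbrClique (T.parent e)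
  have hout {w : V} (hw : w ∈ K.erase (T.vertex (T.parent u))) (hadj : H.Adj (T.vertex e) w) :
      w ∈ nbrsIn H (T.red (T.parent e)) (T.vertex e) \ M := by
    refine mem_sdiff.2 ⟨mem_nbrsIn.2 ⟨?_, hadj⟩, fun hwM ↦ hpe ?_⟩
    · exact mem_red_of_isAncestor ((KickTree.isAncestor_parent he0).trans he) (hmem hw).1
        (hmem hw).2
    · have hpN : T.vertex (T.parent e) ∈ T.nbrs (T.parent u) :=
        hsub hw (mem_nbrsIn.2 ⟨(vertex_parent_mem_red he0 he).2 hz, (hM.adj hwM).symm⟩)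
      rcases eq_or_ne (T.vertex (T.parent e)) (T.vertex u) with heq | hne
      · exact heq ▸ h.mem_red
      · refine h.mem_red_zero hdeg (h.mem_of_mem_nbrs hdeg hpN hne) ?_
        exact (KickTree.mem_nbrs.1 hpN).2.ne'
  exact hfg (card_le_one.1 ((isOptimal _).card_nbrsIn_sdiff_le_one hdeg (coloring_vertex _) hecore
    hM) f (hout hf hzf) v (hout hg hzg))

lemma vertex_parent_mem_red_of_isAncestor (hg : T.IsAncestor g y) (hgr : T.vertex g ∈ T.red 0)
    (hgK : T.vertex g ∈ K) (hgp : T.vertex g ≠ T.vertex (T.parent u)) (hfK : f ∈ K)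
    (hfy : f ∈ T.red y) (hfg : f ≠ T.vertex g) (hfp : f ≠ T.vertex (T.parent u)) :
    T.vertex (T.parent u) ∈ T.red y := by
  by_contra hpy
  have hg0 := ne_zero_of_mem_red hgr
  obtain ⟨hpg, hgcore⟩ := parent_of_mem_red hgr
  have htight := h.isTightAt hdeg
  have hpu := (parent_of_mem_red h.mem_red).1
  have hgN := h.mem_nbrs_of_mem hdeg hgK hgp
  have hlt : T.parent g < T.parent u := by
    refine lt_of_le_of_ne (parent_le_of_mem_redCore hpu hgr (redCore_eq_nbrs htight ▸ hgN)) ?_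
    exact fun he ↦ hpy (he ▸ (KickTree.vertex_parent_mem_red hg0 hg).2 hgr)
  obtain ⟨M, hM, huM⟩ := exists_isNbrClique_notMem hpg h.mem_red hlt
  have hgM : T.vertex g ∈ M := core_subset hM hgcore
  have hup : T.vertex u ∈ T.red (T.parent g) :=
    (vertex_mem_red_of_lt (hlt.trans (T.parent_lt h.ne_zero))).2 h.mem_red
  have hgu : T.vertex g ≠ T.vertex u := by rintro he; exact h.vertex_notMem (he ▸ hgK)
  have hadj_gu := (isNbrClique_nbrs htight).pairwise_adj hgN h.mem_nbrs hgu
  have hfp' : f ∈ T.red (T.parent g) := KickTree.mem_red_of_isAncestor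
    ((KickTree.isAncestor_parent hg0).trans hg) (h.mem_red_zero hdeg hfK hfp) hfy
  have hadj_gf := h.isNbrClique.pairwise_adj hgK hfK hfg.symm
  have hfM : f ∈ M := by
    by_contra hfM
    have hle := (isOptimal _).card_nbrsIn_sdiff_le_one hdeg (coloring_vertex _) hgcore hM
    have hfu := card_le_one.1 hle f (mem_sdiff.2 ⟨mem_nbrsIn.2 ⟨hfp', hadj_gf⟩, hfM⟩) _
      (mem_sdiff.2 ⟨mem_nbrsIn.2 ⟨hup, hadj_gu⟩, huM⟩)
    exact h.vertex_notMem (hfu ▸ hfK)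
  have hsub : M ⊆ (T.nbrs (T.parent u)).erase (T.vertex u) := fun z hz ↦ by
    refine mem_erase.2 ⟨by rintro rfl; exact huM hz, ?_⟩
    rcases eq_or_ne z f with rfl | hzf
    · exact h.mem_nbrs_of_mem hdeg hfK hfp
    rcases eq_or_ne z (T.vertex g) with rfl | hzg
    · exact hgN
    exact h.mem_nbrs_of_adj_of_adj hdeg hq hω (mem_erase.2 ⟨hfp, hfK⟩) (mem_erase.2 ⟨hgp, hgK⟩)
      hfg (mem_red_zero_of_mem_isNbrClique hdeg hq hω hpg hM hz) (hM.pairwise_adj hz hfM hzf)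
      (hM.pairwise_adj hz hgM hzg)
  have hcard := card_le_card hsub
  rw [card_erase_of_mem h.mem_nbrs, (isNbrClique_nbrs htight).card_eq, hM.card_eq] at hcard
  omega

end IsInvaded

lemma not_disjoint_of_isNbrClique (ha : T.vertex a ∉ T.red 0) (hy : T.vertex y ∉ T.red 0)
    (hay : a ≤ y) (hL : IsNbrClique H (q o) (T.red a) (T.vertex y) L)
    (hK : IsNbrClique H (q o) (T.red y) (T.vertex y) K) : ¬ Disjoint K L := fun hdisj ↦ by
  obtain ⟨z, hzL, hzy, hz⟩ := exists_notMem_red hdeg hq hy hK hL.isNClique (fun v ↦ hL.adj) hdisj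
  obtain ⟨u, hu, hur, rfl⟩ := exists_isAncestor_of_mem_red hz (hL.mem hzL)
  have h : T.IsInvaded a y u L := ⟨ha, hay, hy, hu, hur, hL, hzL⟩
  set L' := L.erase (T.vertex (T.parent u))
  have hred {v : V} (hv : v ∈ L') : v ∈ T.red 0 :=
    h.mem_red_zero hdeg (mem_of_mem_erase hv) (ne_of_mem_erase hv)
  have hadj {v : V} (hv : v ∈ L') : H.Adj (T.vertex y) v := hL.adj (mem_of_mem_erase hv)
  have hcard : #L' + 1 = q o := by rw [card_erase_add_one hzL, hL.card_eq]
  have hlow := card_le_card_filter_notMem_red_add_one hdeg hK (L := L') (fun v ↦ hadj)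
    (hdisj.mono_right (erase_subset _ _))
  have hup : #{v ∈ L' | v ∉ T.red y} ≤ 1 := by
    refine card_le_one_of_forall_notMem_red hdeg hy (hL.isNClique.isClique.subset ?_)
      (fun v hv ↦ hadj (mem_filter.1 hv).1)
      fun v hv ↦ ⟨hred (mem_filter.1 hv).1, (mem_filter.1 hv).2⟩
    exact coe_subset.2 ((filter_subset _ _).trans (erase_subset _ _))
  obtain ⟨v, hv⟩ := card_pos.1 (show 0 < #{v ∈ L' | v ∉ T.red y} by omega)
  obtain ⟨hvL, hvy⟩ := mem_filter.1 hv
  obtain ⟨g, hg, rfl⟩ := exists_isAncestor_of_notMem_red (hred hvL) hvy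
  obtain ⟨f, hfL, hfg⟩ := exists_mem_ne (show 1 < #L' by omega) (T.vertex g)
  have hfy : f ∈ T.red y := by
    by_contra hfy
    exact hfg (card_le_one.1 hup f (mem_filter.2 ⟨hfL, hfy⟩) _ hv)
  exact hzy (h.vertex_parent_mem_red_of_isAncestor hdeg hq hω hg (hred hvL) (mem_of_mem_erase hvL)
    (ne_of_mem_erase hvL) (mem_of_mem_erase hfL) hfy hfg (ne_of_mem_erase hfL))

lemma not_isNbrClique_of_isNbrClique (ha : T.vertex a ∉ T.red 0) (hy : T.vertex y ∉ T.red 0)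
    (hay : a < y) (hKa : IsNbrClique H (q o) (T.red a) (T.vertex a) K) :
    ¬ IsNbrClique H (q o) (T.red y) (T.vertex y) K := fun hKy ↦ by
  have hya : T.vertex y ≠ T.vertex a := T.injective.ne hay.ne'
  have hyc : T.coloring a (T.vertex y) ≠ some o :=
    fun h ↦ hy ((vertex_mem_red_of_lt hay).1 (mem_red.2 h))
  have hnfork {s t : V} (hf : IsFork H (q o) (T.red a) (T.vertex a) s t)
      (hK : K = (T.nbrs a).erase t) : False := by
    obtain ⟨v, hv, hyv⟩ :=
      (isOptimal a).exists_not_adj_of_isFork hdeg (coloring_vertex a) hq hω hf hyc hya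
    exact hyv (hKy.adj (hK ▸ hv))
  have hcore : T.redCore a = K := by
    rcases (isOptimal a).isNbrClique_core_or_isFork hdeg (coloring_vertex a) with hC | ⟨s, t, hf⟩
    · exact hC.eq_of_subset hKa (core_subset hKa)
    · rcases hf.eq_erase_or_eq_erase hKa with h | h
      exacts [(hnfork hf.symm h).elim, (hnfork hf h).elim]
  have hnadj : ¬ H.Adj (T.vertex y) (T.vertex a) :=
    not_adj_of_isNbrClique hω hKa fun v ↦ hKy.adj
  obtain ⟨v, hv, hdisj⟩ := exists_forall_disjoint_of_card_nbrsIn_sdiff_le_one hq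
    ((isOptimal a).cliqueFreeOn o) hKa.isNClique (fun v hv ↦ hKa.mem hv) fun v hv ↦
      (isOptimal a).card_nbrsIn_sdiff_le_one hdeg (coloring_vertex a)
        (hcore.symm ▸ hv : v ∈ T.redCore a) hKa
  obtain ⟨L, hL⟩ := (isOptimal a).exists_isNbrClique_exchange (coloring_vertex a)
    (hcore.symm ▸ hv : v ∈ T.redCore a) hyc hya
  have hLsub : L ⊆ (T.red a).erase v := fun z hz ↦
    mem_of_mem_insert_of_ne (hL.mem hz) (by rintro rfl; exact hnadj (hL.adj hz))
  have hLa : IsNbrClique H (q o) (T.red a) (T.vertex y) L :=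
    ⟨fun z hz ↦ mem_nbrsIn.2 ⟨mem_of_mem_erase (hLsub hz), hL.adj hz⟩, hL.isNClique⟩
  exact not_disjoint_of_isNbrClique hdeg hq hω ha hy hay.le hLa hKy
    (hdisj L hL.isNClique hLsub)

end Twins

section LateKicks

variable {T} {g u y y' : T.Node} {K K' : Finset V} {e e' s t v : V}

variable (hdeg : ∀ v, H.degree v ≤ ∑ j, q j + 1) (hur : T.vertex u ∈ T.red 0)
include hdeg hur

lemma isNbrClique_redCore_parent (he : e ∈ T.red (T.parent u)) (hue : H.Adj (T.vertex u) e)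
    (hpe : ¬ H.Adj (T.vertex (T.parent u)) e) :
    IsNbrClique H (q o) (T.red (T.parent u)) (T.vertex (T.parent u)) (T.redCore (T.parent u)) := by
  have hopt := isOptimal (T.parent u)
  rcases hopt.isNbrClique_core_or_isFork hdeg (coloring_vertex _) with hC | ⟨s, t, hf⟩
  · exact hC
  · have hsub := hopt.nbrsIn_subset_nbrsIn_of_isFork hdeg (coloring_vertex _) hf
      (parent_of_mem_red hur).2
    exact absurd (mem_nbrsIn.1 (hsub (mem_nbrsIn.2 ⟨he, hue⟩))).2 hpe

lemma eq_of_adj_of_not_adj_parent (he : e ∈ T.red (T.parent u)) (he' : e' ∈ T.red (T.parent u))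
    (hue : H.Adj (T.vertex u) e) (hue' : H.Adj (T.vertex u) e')
    (hpe : ¬ H.Adj (T.vertex (T.parent u)) e) (hpe' : e' ∉ T.redCore (T.parent u)) : e = e' := by
  refine card_le_one.1 ((isOptimal _).card_nbrsIn_sdiff_le_one hdeg (coloring_vertex _)
    (parent_of_mem_red hur).2 (isNbrClique_redCore_parent hdeg hur he hue hpe)) e ?_ e' ?_
  · exact mem_sdiff.2 ⟨mem_nbrsIn.2 ⟨he, hue⟩, fun h ↦ hpe (adj_of_mem_core h)⟩
  · exact mem_sdiff.2 ⟨mem_nbrsIn.2 ⟨he', hue'⟩, hpe'⟩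

lemma eq_insert_filter_adj (hK : H.IsNClique (q o) K) (huK : T.vertex u ∈ K)
    (hKp : ∀ v ∈ K, v ∈ T.red (T.parent u)) (he : e ∈ K)
    (hpe : ¬ H.Adj (T.vertex (T.parent u)) e) :
    K = insert e {v ∈ T.redCore (T.parent u) | H.Adj e v} := by
  have hucore := (parent_of_mem_red hur).2
  have hadj_u {v : V} (hv : v ∈ K) (hvu : v ≠ T.vertex u) : H.Adj (T.vertex u) v :=
    hK.isClique huK hv hvu.symm
  have hecore : e ∉ T.redCore (T.parent u) := fun h ↦ hpe (adj_of_mem_core h)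
  have heu : e ≠ T.vertex u := by rintro rfl; exact hecore hucore
  have hC := isNbrClique_redCore_parent hdeg hur (hKp e he) (hadj_u he heu) hpe
  have hsub : K ⊆ insert e {v ∈ T.redCore (T.parent u) | H.Adj e v} := fun v hv ↦ by
    rcases eq_or_ne v e with rfl | hve
    · exact mem_insert_self _ _
    refine mem_insert_of_mem (mem_filter.2 ⟨?_, hK.isClique he hv hve.symm⟩)
    by_contra hvcore
    have hvu : v ≠ T.vertex u := by rintro rfl; exact hvcore hucore
    exact hve (eq_of_adj_of_not_adj_parent hdeg hur (hKp e he) (hKp v hv) (hadj_u he heu)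
      (hadj_u hv hvu) hpe hvcore).symm
  refine eq_of_subset_of_card_le hsub ?_
  have hne : {v ∈ T.redCore (T.parent u) | H.Adj e v} ≠ T.redCore (T.parent u) := fun h ↦
    (isOptimal _).cliqueFreeOn o (coe_subset.2 (insert_subset (hKp e he) fun v hv ↦ hC.mem hv))
      (hC.isNClique.insert (filter_eq_self.1 h))
  have hlt := card_lt_card ((filter_subset _ _).ssubset_of_ne hne)
  rw [hC.card_eq] at hlt
  rw [card_insert_of_notMem (by simp [hecore]), hK.card_eq]
  omega

variable (hy : T.vertex y ∉ T.red 0) (hlt : T.parent u < y) (hu : T.vertex u ∈ T.redCore y)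
include hy hlt hu

variable (hq : 3 ≤ q o) (hω : H.CliqueFree (q o + 2))
include hq hω

lemma mem_red_parent_of_mem_isNbrClique (hK : IsNbrClique H (q o) (T.red y) (T.vertex y) K)
    (hv : v ∈ K) : v ∈ T.red (T.parent u) := by
  have hv0 := mem_red_zero_of_mem_isNbrClique hdeg hq hω hy hK hv
  by_contra hvp
  obtain ⟨g, hg, rfl⟩ := exists_isAncestor_of_notMem_red hv0 hvp
  obtain ⟨hpg, -⟩ := parent_of_mem_red hv0
  have hgp : g ≠ T.parent u := by rintro rfl; exact (parent_of_mem_red hur).1 hv0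
  have hgu : g < u := hg.le.trans_lt (T.parent_lt (ne_zero_of_mem_red hur))
  have hnt : ¬ T.IsTightAt o g := fun ht ↦ by
    have hmem := mem_redCore_parent hv0 ht (mem_nbrs.2 ⟨(vertex_mem_red_of_lt hgu).2 hur,
      hK.pairwise_adj hv (core_subset hK hu) (T.injective.ne hgu.ne)⟩)
      (T.injective.ne ((T.parent_lt (ne_zero_of_mem_red hv0)).trans hgu).ne')
    exact (parent_le_of_mem_redCore hpg hur hmem).not_gt
      ((T.parent_lt (ne_zero_of_mem_red hv0)).trans_le hg.le)
  have hy0 : y ≠ 0 := Fin.ne_zero_of_lt hlt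
  have hle : T.parent y ≤ g := by
    by_contra! hgy
    exact hnt (isTightAt_of_lt_parent hdeg hy0 hgy (hK.adj hv).symm hy)
  obtain ⟨hp0, hgpp⟩ := hg.of_ne hgp
  obtain rfl : g = T.parent y := le_antisymm (hgpp.le.trans (parent_mono hp0 hy0 hlt.le)) hle
  exact vertex_notMem_red_of_isAncestor (isAncestor_parent hy0) hv0 (hK.mem hv)

lemma exists_eq_insert_filter_adj (hK : IsNbrClique H (q o) (T.red y) (T.vertex y) K) :
    ∃ e ∈ T.red (T.parent u), H.Adj (T.vertex u) e ∧ ¬ H.Adj (T.vertex (T.parent u)) e ∧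
      K = insert e {v ∈ T.redCore (T.parent u) | H.Adj e v} := by
  have hKp {v : V} (hv : v ∈ K) : v ∈ T.red (T.parent u) :=
    mem_red_parent_of_mem_isNbrClique hdeg hur hy hlt hu hq hω hK hv
  obtain ⟨hp, hucore⟩ := parent_of_mem_red hur
  have huK : T.vertex u ∈ K := core_subset hK hu
  obtain ⟨e, he, hpe⟩ : ∃ e ∈ K, ¬ H.Adj (T.vertex (T.parent u)) e := by
    by_contra! hadj
    exact not_isNbrClique_of_isNbrClique hdeg hq hω hp hy hlt
      ⟨fun v hv ↦ mem_nbrsIn.2 ⟨hKp hv, hadj v hv⟩, hK.isNClique⟩ hK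
  have hne : T.vertex u ≠ e := by rintro rfl; exact hpe (adj_of_mem_core hucore)
  exact ⟨e, hKp he, hK.pairwise_adj huK he hne, hpe,
    eq_insert_filter_adj hdeg hur hK.isNClique huK (fun v ↦ hKp) he hpe⟩

lemma not_isTightAt_of_mem_redCore : ¬ T.IsTightAt o u := fun ht ↦ by
  obtain ⟨K, hK⟩ := exists_isNbrClique y
  obtain ⟨e, he, hue, hpe, -⟩ := exists_eq_insert_filter_adj hdeg hur hy hlt hu hq hω hK
  have hep : e ≠ T.vertex (T.parent u) := by rintro rfl; exact vertex_notMem_red _ he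
  have heu : e ∈ T.nbrs u := by
    rw [mem_nbrs, red, T.coloring_eq (ne_zero_of_mem_red hur), mem_colorClass,
      kick_apply_of_ne hep hue.ne']
    exact ⟨mem_red.1 he, hue⟩
  exact hpe (adj_of_mem_core (mem_redCore_parent hur ht heu hep))

lemma isNbrClique_unique (hy' : T.vertex y' ∉ T.red 0) (hlt' : T.parent u < y')
    (hu' : T.vertex u ∈ T.redCore y') (hK : IsNbrClique H (q o) (T.red y) (T.vertex y) K)
    (hK' : IsNbrClique H (q o) (T.red y') (T.vertex y') K') : K = K' := by
  obtain ⟨e, he, hue, hpe, hKe⟩ := exists_eq_insert_filter_adj hdeg hur hy hlt hu hq hω hK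
  obtain ⟨e', he', hue', hpe', hKe'⟩ :=
    exists_eq_insert_filter_adj hdeg hur hy' hlt' hu' hq hω hK'
  have heq : e = e' := eq_of_adj_of_not_adj_parent hdeg hur he he' hue hue' hpe
    fun h ↦ hpe' (adj_of_mem_core h)
  rw [hKe, hKe', heq]

lemma eq_of_mem_redCore (hy' : T.vertex y' ∉ T.red 0) (hlt' : T.parent u < y')
    (hu' : T.vertex u ∈ T.redCore y') : y = y' := by
  obtain ⟨K, hK⟩ := exists_isNbrClique y
  obtain ⟨K', hK'⟩ := exists_isNbrClique y'
  obtain rfl := isNbrClique_unique hdeg hur hy hlt hu hq hω hy' hlt' hu' hK hK'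
  rcases lt_trichotomy y y' with h | h | h
  · exact (not_isNbrClique_of_isNbrClique hdeg hq hω hy hy' h hK hK').elim
  · exact h
  · exact (not_isNbrClique_of_isNbrClique hdeg hq hω hy' hy h hK' hK).elim

lemma not_isFork_of_mem_redCore : ¬ IsFork H (q o) (T.red y) (T.vertex y) s t := fun hf ↦ by
  have heq := isNbrClique_unique hdeg hur hy hlt hu hq hω hy hlt hu hf.isNbrClique_erase_left
    hf.isNbrClique_erase_right
  exact hf.ne (erase_injOn _ hf.left_mem hf.right_mem heq)

end LateKicks

section TightKicks

/-- From the node `i`, the vertex of the node `l` can be kicked out of a class other than `o`. -/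
def IsTightKick (i l : T.Node) : Prop :=
  ∃ j ≠ o, T.coloring i (T.vertex l) = some j ∧ H.Adj (T.vertex i) (T.vertex l) ∧ T.IsTightAt j i

instance (i l : T.Node) : Decidable (T.IsTightKick i l) :=
  inferInstanceAs (Decidable (∃ j ≠ o, T.coloring i (T.vertex l) = some j ∧
    H.Adj (T.vertex i) (T.vertex l) ∧ #(nbrsIn H (colorClass (T.coloring i) j) (T.vertex i)) = q j))

/-- The nodes whose vertices were red originally. -/
def redNodes : Finset T.Node := {i | T.vertex i ∈ T.red 0}

/-- The nodes `y` after `parent u`, not red originally, from which the red vertex of the node `u`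
can be kicked. -/
def lateKickers (u : T.Node) : Finset T.Node :=
  {y ∈ T.redNodesᶜ | T.parent u < y ∧ T.vertex u ∈ T.redCore y}

variable {T} {i i₁ i₂ : ι} {l u y : T.Node} {v : V}

lemma mem_redNodes : u ∈ T.redNodes ↔ T.vertex u ∈ T.red 0 := by simp [redNodes]

lemma mem_lateKickers :
    y ∈ T.lateKickers u ↔ T.vertex y ∉ T.red 0 ∧ T.parent u < y ∧ T.vertex u ∈ T.redCore y := by
  simp [lateKickers, mem_redNodes]

lemma IsTightKick.isKick (h : T.IsTightKick u l) :
    IsKick H o q (T.coloring 0) (T.coloring u) (T.vertex u) (T.vertex l) := .inr h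

lemma IsTightKick.notMem_red (h : T.IsTightKick u l) : T.vertex l ∉ T.red u := fun hl ↦ by
  obtain ⟨j, hj, hc, -⟩ := h
  rw [mem_red, hc] at hl
  exact hj (Option.some_injective _ hl)

lemma IsTightKick.adj (h : T.IsTightKick u l) : H.Adj (T.vertex u) (T.vertex l) :=
  let ⟨_, _, _, hadj, _⟩ := h
  hadj

lemma IsTightKick.isAncestor (h : T.IsTightKick u l) (hl : T.vertex l ∈ T.red 0) :
    l ≠ u ∧ T.IsAncestor l u := by
  obtain ⟨g, hg, hgl⟩ := exists_isAncestor_of_notMem_red hl h.notMem_red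
  obtain rfl := T.injective hgl
  exact ⟨fun hne ↦ h.adj.ne (hne ▸ rfl), hg⟩

lemma not_isTightKick_parent (hu : T.vertex u ∈ T.red 0) : ¬ T.IsTightKick u (T.parent u) :=
  fun h ↦ h.notMem_red
    ((vertex_parent_mem_red (ne_zero_of_mem_red hu) (.refl u)).2 hu)

lemma nbrsIn_subset_image_isTightKick (hT : T.IsComplete) (hi : i ≠ o) (ht : T.IsTightAt i u) :
    nbrsIn H (colorClass (T.coloring u) i) (T.vertex u) ⊆
      ({l | T.IsTightKick u l} : Finset T.Node).image T.vertex := fun v hv ↦ by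
  obtain ⟨hc, hadj⟩ := mem_nbrsIn.1 hv
  rw [mem_colorClass] at hc
  obtain ⟨l, rfl⟩ := hT u v (.inr ⟨i, hi, hc, hadj, ht⟩)
  exact mem_image_of_mem _ (mem_filter_univ l |>.2 ⟨i, hi, hc, hadj, ht⟩)

lemma le_card_isTightKick (hT : T.IsComplete) (hi : i ≠ o) (ht : T.IsTightAt i u) :
    q i ≤ #{l | T.IsTightKick u l} := by
  rw [IsTightAt, IsTight] at ht
  exact ht ▸ (card_le_card (nbrsIn_subset_image_isTightKick hT hi ht)).trans card_image_le

lemma add_le_card_isTightKick (hT : T.IsComplete) (h₁ : i₁ ≠ o) (h₂ : i₂ ≠ o) (h₁₂ : i₁ ≠ i₂)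
    (ht₁ : T.IsTightAt i₁ u) (ht₂ : T.IsTightAt i₂ u) :
    q i₁ + q i₂ ≤ #{l | T.IsTightKick u l} := by
  have hdisj : Disjoint (nbrsIn H (colorClass (T.coloring u) i₁) (T.vertex u))
      (nbrsIn H (colorClass (T.coloring u) i₂) (T.vertex u)) := by
    refine disjoint_left.2 fun v hv₁ hv₂ ↦ h₁₂ ?_
    rw [mem_nbrsIn, mem_colorClass] at hv₁ hv₂
    exact Option.some_injective _ (hv₁.1.symm.trans hv₂.1)
  have hsub := card_le_card (union_subset (nbrsIn_subset_image_isTightKick hT h₁ ht₁)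
    (nbrsIn_subset_image_isTightKick hT h₂ ht₂))
  rw [card_union_of_disjoint hdisj, ht₁, ht₂] at hsub
  exact hsub.trans card_image_le

lemma card_filter_isTightKick_add_card_redCore_parent_le (hu : u ∈ T.redNodes) :
    #{l ∈ T.redNodes | T.IsTightKick l u} + #(T.redCore (T.parent u)) ≤ #(T.nbrs u) := by
  rw [mem_redNodes] at hu
  obtain ⟨hp, hcore⟩ := parent_of_mem_red hu
  obtain ⟨K, hK⟩ := exists_isNbrClique (T.parent u)
  have hself : T.vertex (T.parent u) ∉ T.redCore (T.parent u) := fun h ↦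
    H.irrefl (adj_of_mem_core h)
  have hnbrs : insert (T.vertex (T.parent u)) ((T.redCore (T.parent u)).erase (T.vertex u)) ⊆
      T.nbrs u := by
    have hex := (hK.exchange (core_subset hK hcore)).subset
    rw [red, ← colorClass_kick_self (coloring_vertex _) (mem_red.1 (mem_of_mem_core hcore)),
      ← T.coloring_eq (ne_zero_of_mem_red hu)] at hex
    exact (insert_subset_insert _ (erase_subset_erase _ (core_subset hK))).trans hex
  have hkick : ({l ∈ T.redNodes | T.IsTightKick l u} : Finset T.Node).image T.vertex ⊆
      T.nbrs u := fun v hv ↦ by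
    obtain ⟨l, hl, rfl⟩ := mem_image.1 hv
    obtain ⟨hl, h⟩ := mem_filter.1 hl
    obtain ⟨hne, hanc⟩ := h.isAncestor hu
    have hlu := (vertex_mem_red_of_lt (hanc.le.lt_of_ne hne)).2 (mem_redNodes.1 hl)
    exact mem_nbrs.2 ⟨hlu, h.adj.symm⟩
  have hdisj : Disjoint (({l ∈ T.redNodes | T.IsTightKick l u} : Finset T.Node).image T.vertex)
      (insert (T.vertex (T.parent u)) ((T.redCore (T.parent u)).erase (T.vertex u))) := by
    refine disjoint_left.2 fun v hv hv' ↦ ?_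
    obtain ⟨l, hl, rfl⟩ := mem_image.1 hv
    obtain ⟨hl, h⟩ := mem_filter.1 hl
    obtain ⟨hne, hanc⟩ := h.isAncestor hu
    have hlt := (T.parent_lt (ne_zero_of_mem_red hu)).trans_le (hanc.le_parent hne)
    rw [mem_redNodes] at hl
    rcases mem_insert.1 hv' with h | h
    · exact hp (h ▸ hl)
    · exact hlt.not_ge (parent_le_of_mem_redCore hp hl (mem_of_mem_erase h))
  have hcard := card_le_card (union_subset hkick hnbrs)
  rwa [card_union_of_disjoint hdisj, card_image_of_injective _ T.injective,
    card_insert_of_notMem (fun h ↦ hself (mem_of_mem_erase h)), card_erase_add_one hcore] at hcard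

lemma card_filter_isTightKick_add_card_redCore_le (hy : y ∉ T.redNodes) :
    #{u ∈ T.redNodes | T.IsTightKick u y ∧ T.vertex u ∉ T.redCore y} + #(T.redCore y) ≤
      #(T.nbrs y) + 1 := by
  rw [mem_redNodes] at hy
  have hsub : ({u ∈ T.redNodes | T.IsTightKick u y ∧ T.vertex u ∉ T.redCore y} :
      Finset T.Node).image T.vertex ∪ T.redCore y ⊆
      insert (T.vertex (T.parent y)) (T.nbrs y) := by
    refine union_subset (fun v hv ↦ ?_) (core_subset_nbrsIn.trans (subset_insert _ _))
    obtain ⟨u, hu, rfl⟩ := mem_image.1 hv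
    obtain ⟨hur, h, -⟩ := mem_filter.1 hu
    rw [mem_redNodes] at hur
    by_cases huy : T.vertex u ∈ T.red y
    · exact mem_insert_of_mem (mem_nbrs.2 ⟨huy, h.adj.symm⟩)
    obtain ⟨g, hg, hgu⟩ := exists_isAncestor_of_notMem_red hur huy
    obtain rfl := T.injective hgu
    obtain ⟨hy0, hgp⟩ := hg.of_ne (by rintro rfl; exact hy hur)
    rw [(parent_le_of_isKick hy0 h.isKick).antisymm hgp.le]
    exact mem_insert_self _ _
  have hdisj : Disjoint (({u ∈ T.redNodes | T.IsTightKick u y ∧ T.vertex u ∉ T.redCore y} :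
      Finset T.Node).image T.vertex) (T.redCore y) := by
    refine disjoint_left.2 fun v hv ↦ ?_
    obtain ⟨u, hu, rfl⟩ := mem_image.1 hv
    exact (mem_filter.1 hu).2.2
  rw [← card_image_of_injective _ T.injective, ← card_union_of_disjoint hdisj]
  exact (card_le_card hsub).trans (card_insert_le _ _)

variable (hdeg : ∀ v, H.degree v ≤ ∑ j, q j + 1) (hq : 3 ≤ q o) (hω : H.CliqueFree (q o + 2))

include hdeg in
lemma four_le_card_isTightKick (hT : T.IsComplete) (h₁ : i₁ ≠ o) (h₂ : i₂ ≠ o) (h₁₂ : i₁ ≠ i₂)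
    (hsum : 4 ≤ q i₁ + q i₂) (ht : ¬ T.IsTightAt o u) : 4 ≤ #{l | T.IsTightKick u l} :=
  hsum.trans <| add_le_card_isTightKick hT h₁ h₂ h₁₂ (isTightAt_of_not_isTightAt hdeg h₁.symm ht)
    (isTightAt_of_not_isTightAt hdeg h₂.symm ht)

include hdeg in
lemma one_le_card_isTightKick (hT : T.IsComplete) (h₁ : i₁ ≠ o) (h₂ : i₂ ≠ o) (h₁₂ : i₁ ≠ i₂)
    (hq₁ : 1 ≤ q i₁) (hq₂ : 1 ≤ q i₂) : 1 ≤ #{l | T.IsTightKick u l} := by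
  by_cases ht : T.IsTightAt i₁ u
  · exact hq₁.trans (le_card_isTightKick hT h₁ ht)
  · exact hq₂.trans (le_card_isTightKick hT h₂ (isTightAt_of_not_isTightAt hdeg h₁₂ ht))

include hdeg hq hω

lemma card_redCore_le_card_filter (hT : T.IsComplete) (hy : y ∉ T.redNodes) :
    #(T.redCore y) ≤ #{u ∈ T.redNodes | T.vertex u ∈ T.redCore y} := by
  rw [mem_redNodes] at hy
  refine (card_le_card fun v hv ↦ ?_).trans (card_image_le (f := T.vertex))
  obtain ⟨l, rfl⟩ := hT y v (.inl ⟨fun h ↦ hy (mem_red.2 h), hv⟩)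
  obtain ⟨K, hK⟩ := exists_isNbrClique y
  have hl := mem_red_zero_of_mem_isNbrClique hdeg hq hω hy hK (core_subset hK hv)
  exact mem_image_of_mem _ (mem_filter.2 ⟨mem_redNodes.2 hl, hv⟩)

end TightKicks

section DoubleCounting

variable {T} {i₁ i₂ : ι} {u y : T.Node}

/-- The weight of a node in the double counting of the kicks; it is `2` at a fork and `1`
otherwise. -/
def weight (y : T.Node) : ℕ := q o + 1 - #(T.redCore y)

lemma parent_notMem_lateKickers : T.parent u ∉ T.lateKickers u := fun h ↦
  lt_irrefl _ (mem_lateKickers.1 h).2.1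

lemma filter_mem_redCore_eq (hu : u ∈ T.redNodes) :
    {y ∈ T.redNodesᶜ | T.vertex u ∈ T.redCore y} = insert (T.parent u) (T.lateKickers u) := by
  rw [mem_redNodes] at hu
  obtain ⟨hp, hcore⟩ := parent_of_mem_red hu
  ext y
  simp only [mem_filter, mem_compl, mem_redNodes, mem_insert, mem_lateKickers]
  constructor
  · rintro ⟨hy, huy⟩
    rcases (parent_le_of_mem_redCore hy hu huy).eq_or_lt with h | h
    exacts [.inl h.symm, .inr ⟨hy, h, huy⟩]
  · rintro (rfl | ⟨hy, -, huy⟩)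
    exacts [⟨hp, hcore⟩, ⟨hy, huy⟩]

lemma card_isTightKick_le (hu : u ∈ T.redNodes) :
    #{l | T.IsTightKick u l} ≤ #{l ∈ T.redNodes | T.IsTightKick u l} +
      #{y ∈ T.redNodesᶜ | T.IsTightKick u y ∧ T.vertex u ∉ T.redCore y} +
        #(T.lateKickers u) := by
  refine (card_le_card fun l hl ↦ ?_).trans
    ((card_union_le _ _).trans (Nat.add_le_add_right (card_union_le _ _) _))
  rw [mem_filter_univ] at hl
  by_cases hlr : l ∈ T.redNodes
  · simp [hlr, hl]
  by_cases hlu : T.vertex u ∈ T.redCore l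
  · have hmem : l ∈ ({y ∈ T.redNodesᶜ | T.vertex u ∈ T.redCore y} : Finset T.Node) := by
      simp [hlr, hlu]
    rw [filter_mem_redCore_eq hu] at hmem
    rcases mem_insert.1 hmem with rfl | hmem
    · exact absurd hl (not_isTightKick_parent (mem_redNodes.1 hu))
    · exact mem_union_right _ hmem
  · simp [hlr, hl, hlu]

variable (hdeg : ∀ v, H.degree v ≤ ∑ j, q j + 1)
include hdeg

lemma card_nbrs_le (y : T.Node) : #(T.nbrs y) ≤ q o + 1 :=
  (isOptimal y).card_nbrsIn_le hdeg (coloring_vertex y) o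

lemma card_redCore_eq_or_isFork (y : T.Node) :
    #(T.redCore y) = q o ∨ ∃ s t, IsFork H (q o) (T.red y) (T.vertex y) s t :=
  ((isOptimal y).isNbrClique_core_or_isFork hdeg (coloring_vertex y)).imp_left (·.card_eq)

lemma card_redCore_parent_of_isTightAt (hu : u ∈ T.redNodes) (ht : T.IsTightAt o u) :
    #(T.redCore (T.parent u)) = q o := by
  rw [mem_redNodes] at hu
  refine (card_redCore_eq_or_isFork hdeg _).resolve_right fun ⟨s, t, hf⟩ ↦ ?_
  refine (isOptimal _).not_isTight_kick_of_isFork hdeg (coloring_vertex _) hf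
    (parent_of_mem_red hu).2 ?_
  rwa [← T.coloring_eq (ne_zero_of_mem_red hu)]

variable (hq : 3 ≤ q o) (hω : H.CliqueFree (q o + 2))
include hq hω

lemma lateKickers_eq_empty_of_isTightAt (hu : u ∈ T.redNodes) (ht : T.IsTightAt o u) :
    T.lateKickers u = ∅ := by
  refine eq_empty_of_forall_notMem fun y hy ↦ ?_
  obtain ⟨hyr, hlt, huy⟩ := mem_lateKickers.1 hy
  exact not_isTightAt_of_mem_redCore hdeg (mem_redNodes.1 hu) hyr hlt huy hq hω ht

lemma card_lateKickers_le_one (hu : u ∈ T.redNodes) : #(T.lateKickers u) ≤ 1 := by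
  refine card_le_one.2 fun y hy y' hy' ↦ ?_
  obtain ⟨hyr, hlt, huy⟩ := mem_lateKickers.1 hy
  obtain ⟨hyr', hlt', huy'⟩ := mem_lateKickers.1 hy'
  exact eq_of_mem_redCore hdeg (mem_redNodes.1 hu) hyr hlt huy hq hω hyr' hlt' huy'

lemma card_redCore_parent_of_mem_lateKickers (hu : u ∈ T.redNodes) (hy : y ∈ T.lateKickers u) :
    #(T.redCore (T.parent u)) = q o := by
  rw [mem_redNodes] at hu
  obtain ⟨hyr, hlt, huy⟩ := mem_lateKickers.1 hy
  obtain ⟨K, hK⟩ := exists_isNbrClique y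
  obtain ⟨e, he, hue, hpe, -⟩ := exists_eq_insert_filter_adj hdeg hu hyr hlt huy hq hω hK
  exact (isNbrClique_redCore_parent hdeg hu he hue hpe).card_eq

lemma weight_of_mem_lateKickers (hu : u ∈ T.redNodes) (hy : y ∈ T.lateKickers u) :
    T.weight y = 1 := by
  obtain ⟨hyr, hlt, huy⟩ := mem_lateKickers.1 hy
  rw [weight, (card_redCore_eq_or_isFork hdeg y).resolve_right fun ⟨s, t, hf⟩ ↦
    not_isFork_of_mem_redCore hdeg (mem_redNodes.1 hu) hyr hlt huy hq hω hf]
  omega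

lemma card_lateKickers_add_le (hu : u ∈ T.redNodes) :
    #(T.lateKickers u) + q o ≤ #(T.redCore (T.parent u)) + 1 := by
  have hcard := card_lateKickers_le_one hdeg hq hω hu
  rcases (T.lateKickers u).eq_empty_or_nonempty with hempty | ⟨y, hy⟩
  · rcases card_redCore_eq_or_isFork hdeg (T.parent u) with hp | ⟨s, t, hf⟩
    · omega
    · have : #(T.redCore (T.parent u)) + 1 = q o := hf.card_core_add_one
      simp [hempty, this]
  · have := card_redCore_parent_of_mem_lateKickers hdeg hq hω hu hy
    omega

lemma sum_weight_eq (hu : u ∈ T.redNodes) :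
    ∑ y ∈ T.redNodesᶜ with T.vertex u ∈ T.redCore y, T.weight y =
      T.weight (T.parent u) + #(T.lateKickers u) := by
  rw [filter_mem_redCore_eq hu, sum_insert parent_notMem_lateKickers,
    sum_congr rfl fun y hy ↦ weight_of_mem_lateKickers hdeg hq hω hu hy, card_eq_sum_ones]

lemma sum_weight_add_card_le (hT : T.IsComplete) (h₁ : i₁ ≠ o) (h₂ : i₂ ≠ o) (h₁₂ : i₁ ≠ i₂)
    (hq₁ : 1 ≤ q i₁) (hq₂ : 1 ≤ q i₂) (hsum : 4 ≤ q i₁ + q i₂) (hu : u ∈ T.redNodes) :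
    ∑ y ∈ T.redNodesᶜ with T.vertex u ∈ T.redCore y, T.weight y +
        #{l ∈ T.redNodes | T.IsTightKick l u} ≤
      #{l ∈ T.redNodes | T.IsTightKick u l} +
        #{y ∈ T.redNodesᶜ | T.IsTightKick u y ∧ T.vertex u ∉ T.redCore y} := by
  have hkicks := card_isTightKick_le hu
  have hkicked := card_filter_isTightKick_add_card_redCore_parent_le hu
  rw [sum_weight_eq hdeg hq hω hu, weight]
  by_cases ht : T.IsTightAt o u
  · have hone := one_le_card_isTightKick (u := u) hdeg hT h₁ h₂ h₁₂ hq₁ hq₂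
    have hcore := card_redCore_parent_of_isTightAt hdeg hu ht
    have hnbrs : #(T.nbrs u) = q o := ht
    rw [lateKickers_eq_empty_of_isTightAt hdeg hq hω hu ht, card_empty] at hkicks ⊢
    omega
  · have hfour := four_le_card_isTightKick hdeg hT h₁ h₂ h₁₂ hsum ht
    have hlate := card_lateKickers_add_le hdeg hq hω hu
    have hnbrs := card_nbrs_le hdeg u
    omega

lemma card_filter_isTightKick_lt (hT : T.IsComplete) (hy : y ∉ T.redNodes) :
    #{u ∈ T.redNodes | T.IsTightKick u y ∧ T.vertex u ∉ T.redCore y} <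
      #{u ∈ T.redNodes | T.vertex u ∈ T.redCore y} * T.weight y := by
  have hkicks := card_filter_isTightKick_add_card_redCore_le hy
  have hcore := card_redCore_le_card_filter hdeg hq hω hT hy
  have hnbrs := card_nbrs_le hdeg y
  rcases card_redCore_eq_or_isFork hdeg y with hy | ⟨s, t, hf⟩
  · have hweight : T.weight y = 1 := by rw [weight]; omega
    rw [hweight]
    omega
  · have hy : #(T.redCore y) + 1 = q o := hf.card_core_add_one
    have hweight : T.weight y = 2 := by rw [weight]; omega
    rw [hweight]
    omega

theorem not_isComplete (h₁ : i₁ ≠ o) (h₂ : i₂ ≠ o) (h₁₂ : i₁ ≠ i₂) (hq₁ : 1 ≤ q i₁)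
    (hq₂ : 1 ≤ q i₂) (hsum : 4 ≤ q i₁ + q i₂) : ¬ T.IsComplete := fun hT ↦ by
  have hred := sum_le_sum fun u hu ↦
    sum_weight_add_card_le hdeg hq hω hT h₁ h₂ h₁₂ hq₁ hq₂ hsum (u := u) hu
  have hroot : 0 ∈ T.redNodesᶜ := by
    rw [mem_compl, mem_redNodes]
    exact vertex_notMem_red 0
  have hother := sum_lt_sum_of_nonempty ⟨0, hroot⟩ fun y hy ↦
    card_filter_isTightKick_lt hdeg hq hω hT (mem_compl.1 hy)
  have hweight : ∑ u ∈ T.redNodes, ∑ y ∈ T.redNodesᶜ with T.vertex u ∈ T.redCore y, T.weight y =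
      ∑ y ∈ T.redNodesᶜ, #{u ∈ T.redNodes | T.vertex u ∈ T.redCore y} * T.weight y := by
    simp only [sum_filter, card_filter, sum_mul, ite_mul, one_mul, zero_mul]
    exact sum_comm
  have hkicked : ∑ u ∈ T.redNodes, #{l ∈ T.redNodes | T.IsTightKick l u} =
      ∑ u ∈ T.redNodes, #{l ∈ T.redNodes | T.IsTightKick u l} :=
    (sum_card_bipartiteAbove_eq_sum_card_bipartiteBelow _).symm
  have hkicks : ∑ u ∈ T.redNodes,
        #{y ∈ T.redNodesᶜ | T.IsTightKick u y ∧ T.vertex u ∉ T.redCore y} =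
      ∑ y ∈ T.redNodesᶜ, #{u ∈ T.redNodes | T.IsTightKick u y ∧ T.vertex u ∉ T.redCore y} :=
    sum_card_bipartiteAbove_eq_sum_card_bipartiteBelow _
  rw [sum_add_distrib, sum_add_distrib] at hred
  omega

end DoubleCounting

end KickTree

omit [DecidableEq V] in
theorem exists_isFeasible_of_degree_le {i₁ i₂ : ι} (h₁ : i₁ ≠ o) (h₂ : i₂ ≠ o) (h₁₂ : i₁ ≠ i₂)
    (hq : 3 ≤ q o) (hq₁ : 1 ≤ q i₁) (hq₂ : 1 ≤ q i₂) (hsum : 4 ≤ q i₁ + q i₂)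
    (hdeg : ∀ v, H.degree v ≤ ∑ j, q j + 1) (hω : H.CliqueFree (q o + 2)) :
    ∃ c : V → Option ι, IsFeasible H o q c ∧ ∀ v, c v ≠ none := by
  classical
  obtain ⟨c, hc⟩ : ∃ c : V → Option ι, IsOptimal H o q c := exists_isOptimal
  refine ⟨c, hc.toIsFeasible, fun v hv ↦ ?_⟩
  obtain ⟨T, hT⟩ := KickTree.exists_isComplete hc hv
  exact KickTree.not_isComplete hdeg hq hω h₁ h₂ h₁₂ hq₁ hq₂ hsum hT

end Trees

end CliqueFreeColoring

open CliqueFreeColoring in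
theorem statement4_general {V ι : Type*} [Fintype V] [Fintype ι] (H : SimpleGraph V)
    [DecidableRel H.Adj] {o i₁ i₂ : ι} (h₁ : i₁ ≠ o) (h₂ : i₂ ≠ o) (h₁₂ : i₁ ≠ i₂) (p : ι → ℕ)
    (hp : ∀ i, 1 ≤ p i) (ho : 4 ≤ p o) (hp₁ : 2 ≤ p i₁) (hp₂ : 2 ≤ p i₂) (h₁₂p : 6 ≤ p i₁ + p i₂)
    (hsum : H.maxDegree + Fintype.card ι ≤ ∑ i, p i + 1) (hω : H.CliqueFree (p o + 1)) :
    ∃ P : ι → Set V,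
      (∀ x : V, ∃! i, x ∈ P i) ∧
      (∀ i, H.CliqueFreeOn (P i) (p i)) ∧
      (∀ W : Set V, H.CliqueFreeOn W (p o) → W.ncard ≤ (P o).ncard) := by
  classical
  obtain ⟨q, rfl⟩ : ∃ q : ι → ℕ, p = fun i ↦ q i + 1 :=
    ⟨fun i ↦ p i - 1, funext fun i ↦ (Nat.sub_add_cancel (hp i)).symm⟩
  beta_reduce at ho hp₁ hp₂ h₁₂p hω
  have hdeg (v : V) : H.degree v ≤ ∑ i, q i + 1 := by
    have := H.degree_le_maxDegree v
    simp only [sum_add_distrib, sum_const, card_univ, smul_eq_mul, mul_one] at hsum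
    omega
  obtain ⟨c, hc, hcolored⟩ := exists_isFeasible_of_degree_le h₁ h₂ h₁₂ (by omega) (by omega)
    (by omega) (by omega) hdeg hω
  refine ⟨fun i ↦ colorClass c i, fun v ↦ ?_, hc.cliqueFreeOn, fun W hW ↦ ?_⟩
  · obtain ⟨i, hi⟩ := Option.ne_none_iff_exists'.1 (hcolored v)
    exact ⟨i, by simpa using hi, fun j hj ↦ by simpa [hi, eq_comm] using hj⟩
  · rw [Set.ncard_coe_finset, Set.ncard_eq_toFinset_card']
    exact hc.card_le W.toFinset (by simpa using hW)

/-- Let `H` be a finite simple graph with `Δ(H) ≥ 9`, let `k ≥ 3` and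
`p 0 ≥ p 1 ≥ … ≥ p (k-1) ≥ 2` with `p 0 ≥ p 1 ≥ 4` and `∑ i, p i = Δ(H) − 1 + k`.
If `ω(H) = p 0`, then `V(H)` can be partitioned into sets `P 0, …, P (k-1)` such
that each `H[P i]` is `K_{p i}`-free and `P 0` is a `K_{p 0}`-free subset of
maximum cardinality. -/
theorem statement4 {V : Type*} [Fintype V] (H : SimpleGraph V) [DecidableRel H.Adj]
    (hΔ : 9 ≤ H.maxDegree)
    (k : ℕ) (hk : 3 ≤ k) (p : Fin k → ℕ)
    (hmono : ∀ i j : Fin k, i ≤ j → p j ≤ p i)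
    (hp2 : ∀ i, 2 ≤ p i)
    (hp4 : 4 ≤ p ⟨1, by omega⟩)
    (hsum : ∑ i, p i = H.maxDegree - 1 + k)
    (hω : H.cliqueNum = p ⟨0, by omega⟩) :
    ∃ P : Fin k → Set V,
      (∀ x : V, ∃! i, x ∈ P i) ∧
      (∀ i, H.CliqueFreeOn (P i) (p i)) ∧
      (∀ W : Set V, H.CliqueFreeOn W (p ⟨0, by omega⟩) → W.ncard ≤ (P ⟨0, by omega⟩).ncard) := by
  have hcard : H.maxDegree + Fintype.card (Fin k) ≤ ∑ i, p i + 1 := by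
    rw [hsum, Fintype.card_fin]
    omega
  have hfree : H.CliqueFree (p ⟨0, by omega⟩ + 1) := fun K hK ↦ by
    have := hK.isClique.card_le_cliqueNum
    have := hK.card_eq
    omega
  have hp₀ : 4 ≤ p ⟨0, by omega⟩ := hp4.trans (hmono _ _ (Fin.mk_le_mk.2 zero_le_one))
  have hp₂ : 2 ≤ p ⟨2, by omega⟩ := hp2 _
  have h₁₂ : (⟨1, by omega⟩ : Fin k) ≠ ⟨2, by omega⟩ := Fin.ne_of_val_ne (OfNat.ofNat_ne_one 2).symm
  exact statement4_general H (Fin.ne_of_val_ne one_ne_zero) (Fin.ne_of_val_ne two_ne_zero) h₁₂ p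
    (fun i ↦ one_le_two.trans (hp2 i)) hp₀ (hp2 _) hp₂ (by omega) hcard hfree
end

section
/- Let H be a finite simple graph and let p, q ≥ 3 be integers with p + q = Δ(H) + 1. Let S ∈ F be chosen so that, among all members of F, the number of q-cliques of H[V(H) ∖ S] is minimum. Then every vertex v of V(H) ∖ S either lies in at most two q-cliques of H[V(H) ∖ S], or lies in a (q+1)-clique of H[V(H) ∖ S] whose vertex set is a connected component of H[V(H) ∖ S]. -/
/-- The number of `r`-cliques of `H` contained in the vertex set `W`
(i.e. the number of `r`-cliques of the induced subgraph `H[W]`). -/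
noncomputable def cliqueCountOn {V : Type*} (H : SimpleGraph V) (W : Set V) (r : ℕ) : ℕ :=
  {t : Finset V | ↑t ⊆ W ∧ H.IsNClique r t}.ncard

/-- `S ∈ 𝓕`: `S` is a `K_p`-free subset of `V(H)` of maximum cardinality and, subject
to this, the number of `(p−1)`-cliques of `H[S]` is minimum. -/
def memF {V : Type*} (H : SimpleGraph V) (p : ℕ) (S : Set V) : Prop :=
  H.CliqueFreeOn S p ∧
  (∀ W : Set V, H.CliqueFreeOn W p → W.ncard ≤ S.ncard) ∧
  (∀ W : Set V, H.CliqueFreeOn W p →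
    (∀ U : Set V, H.CliqueFreeOn U p → U.ncard ≤ W.ncard) →
    cliqueCountOn H S (p - 1) ≤ cliqueCountOn H W (p - 1))

/-!
Since `S` is a maximal `K_p`-free set, every vertex `x ∉ S` completes a `p`-clique with `p - 1` of
its neighbours in `S`, so at most `q` of its neighbours lie outside `S`. All `q`-cliques of
`H[V ∖ S]` through `v` therefore lie in the closed neighbourhood `u` of `v` in `H[V ∖ S]`, a set of
at most `q + 1` vertices. A `q`-clique in `u` omits at most one vertex of `u`; if `x, y ∈ u` are not
adjacent it omits one of them, which leaves only two possibilities. Hence, if there are three such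
cliques, `u` is a `(q + 1)`-clique, and its vertices have no room for further neighbours
outside `S`.
-/

open Finset SimpleGraph

section NeighborFinsetIn

variable {V : Type*} {H : SimpleGraph V} {W : Set V} {v : V}

open Classical in
/-- The set `N_W(v)` of neighbours of `v` in `W`; for `v ∈ W` it is the neighbourhood of `v` in
`H[W]`, encoded as a finset of vertices of `H` rather than of the subtype `W`. -/
noncomputable def neighborFinsetIn (H : SimpleGraph V) (W : Set V) (v : V)
    [Fintype (H.neighborSet v)] : Finset V :=
  {w ∈ H.neighborFinset v | w ∈ W}

variable [Fintype (H.neighborSet v)]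

@[simp]
theorem mem_neighborFinsetIn {w : V} : w ∈ neighborFinsetIn H W v ↔ H.Adj v w ∧ w ∈ W := by
  simp [neighborFinsetIn]

theorem card_neighborFinsetIn_add_compl (W : Set V) :
    #(neighborFinsetIn H W v) + #(neighborFinsetIn H Wᶜ v) = H.degree v := by
  classical
  simpa [neighborFinsetIn] using card_filter_add_card_filter_not (s := H.neighborFinset v) (· ∈ W)

theorem subset_insert_neighborFinsetIn_of_isClique [DecidableEq V] {t : Finset V}
    (ht : H.IsClique t) (hv : v ∈ t) (htW : ↑t ⊆ insert v W) :
    t ⊆ insert v (neighborFinsetIn H W v) := by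
  intro w hw
  obtain rfl | hwv := eq_or_ne w v
  · exact mem_insert_self _ _
  · exact mem_insert_of_mem <|
      mem_neighborFinsetIn.2 ⟨ht hv hw hwv.symm, (htW hw).resolve_left hwv⟩

theorem neighborFinsetIn_subset_of_isNClique {n : ℕ} {t : Finset V} (ht : H.IsNClique (n + 1) t)
    (htW : ↑t ⊆ W) (hv : v ∈ t) (hdeg : #(neighborFinsetIn H W v) ≤ n) :
    neighborFinsetIn H W v ⊆ t := by
  classical
  have hsub : t ⊆ insert v (neighborFinsetIn H W v) :=
    subset_insert_neighborFinsetIn_of_isClique ht.isClique hv (htW.trans (Set.subset_insert v W))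
  have hcard : #(insert v (neighborFinsetIn H W v)) ≤ #t :=
    calc #(insert v (neighborFinsetIn H W v)) ≤ #(neighborFinsetIn H W v) + 1 := card_insert_le _ _
      _ ≤ n + 1 := by gcongr
      _ = #t := ht.card_eq.symm
  exact (subset_insert v _).trans (eq_of_subset_of_card_le hsub hcard).ge

end NeighborFinsetIn

section MaximalCliqueFree

variable {V : Type*} {H : SimpleGraph V} {p : ℕ} {S : Set V} {x : V}

theorem exists_isNClique_of_maximal_cliqueFreeOn (hS : Maximal (H.CliqueFreeOn · p) S)
    (hx : x ∉ S) : ∃ t : Finset V, ↑t ⊆ insert x S ∧ H.IsNClique p t ∧ x ∈ t := by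
  have hinsert : ¬ H.CliqueFreeOn (insert x S) p := hS.not_prop_of_gt (Set.ssubset_insert hx)
  simp only [CliqueFreeOn, not_forall, not_not] at hinsert
  obtain ⟨t, htS, ht⟩ := hinsert
  refine ⟨t, htS, ht, ?_⟩
  by_contra hxt
  exact hS.prop ((Set.subset_insert_iff_of_notMem hxt).1 htS) ht

theorem le_card_neighborFinsetIn_add_one_of_maximal [Fintype (H.neighborSet x)]
    (hS : Maximal (H.CliqueFreeOn · p) S) (hx : x ∉ S) : p ≤ #(neighborFinsetIn H S x) + 1 := by
  classical
  obtain ⟨t, htS, ht, hxt⟩ := exists_isNClique_of_maximal_cliqueFreeOn hS hx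
  calc p = #t := ht.card_eq.symm
    _ ≤ #(insert x (neighborFinsetIn H S x)) :=
      card_le_card (subset_insert_neighborFinsetIn_of_isClique ht.isClique hxt htS)
    _ ≤ #(neighborFinsetIn H S x) + 1 := card_insert_le _ _

theorem card_neighborFinsetIn_compl_le_of_maximal [Fintype (H.neighborSet x)] {q : ℕ}
    (hS : Maximal (H.CliqueFreeOn · p) S) (hx : x ∉ S) (hdeg : H.degree x < p + q) :
    #(neighborFinsetIn H Sᶜ x) ≤ q := by
  have hsum := card_neighborFinsetIn_add_compl (H := H) (v := x) S
  have hle := le_card_neighborFinsetIn_add_one_of_maximal hS hx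
  omega

theorem memF.maximal_cliqueFreeOn [Finite V] (hS : memF H p S) :
    Maximal (H.CliqueFreeOn · p) S :=
  ⟨hS.1, fun W hW hSW ↦ (Set.eq_of_subset_of_ncard_le hSW (hS.2.1 W hW)).ge⟩

end MaximalCliqueFree

section CliquesInSmallSet

variable {V : Type*} {G : SimpleGraph V} {n : ℕ} {u : Finset V}

theorem ncard_isNClique_subset_le_two_of_not_adj {x y : V} (hu : #u ≤ n + 1) (hx : x ∈ u)
    (hy : y ∈ u) (hxy : x ≠ y) (hadj : ¬ G.Adj x y) :
    {t : Finset V | t ⊆ u ∧ G.IsNClique n t}.ncard ≤ 2 := by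
  classical
  have eq_erase {t : Finset V} (htu : t ⊆ u) (ht : #t = n) {a : V} (ha : a ∈ u) (hat : a ∉ t) :
      t = u.erase a := by
    refine eq_of_subset_of_card_le (subset_erase.2 ⟨htu, hat⟩) ?_
    rw [card_erase_of_mem ha, ht]
    omega
  have hpair : {t : Finset V | t ⊆ u ∧ G.IsNClique n t} ⊆ {u.erase x, u.erase y} := by
    rintro t ⟨htu, ht⟩
    by_cases hxt : x ∈ t
    · have hyt : y ∉ t := fun hyt ↦ hadj (ht.isClique hxt hyt hxy)
      exact .inr (eq_erase htu ht.card_eq hy hyt)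
    · exact .inl (eq_erase htu ht.card_eq hx hxt)
  calc {t : Finset V | t ⊆ u ∧ G.IsNClique n t}.ncard
      ≤ ({u.erase x, u.erase y} : Set (Finset V)).ncard := Set.ncard_le_ncard hpair
    _ ≤ ({u.erase y} : Set (Finset V)).ncard + 1 := Set.ncard_insert_le _ _
    _ = 2 := by rw [Set.ncard_singleton]

theorem ncard_isNClique_subset_le_two_or_isNClique (hu : #u ≤ n + 1) :
    {t : Finset V | t ⊆ u ∧ G.IsNClique n t}.ncard ≤ 2 ∨ G.IsNClique (n + 1) u := by
  obtain hlt | hcard : #u ≤ n ∨ #u = n + 1 := by omega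
  · have hsub : {t : Finset V | t ⊆ u ∧ G.IsNClique n t} ⊆ {u} := fun t ⟨htu, ht⟩ ↦
      eq_of_subset_of_card_le htu (hlt.trans_eq ht.card_eq.symm)
    have hone := Set.ncard_le_ncard hsub
    rw [Set.ncard_singleton] at hone
    exact .inl (hone.trans one_le_two)
  · by_cases hclique : G.IsClique u
    · exact .inr ⟨hclique, hcard⟩
    · simp only [isClique_iff, Set.Pairwise, not_forall] at hclique
      obtain ⟨x, hx, y, hy, hxy, hadj⟩ := hclique
      exact .inl (ncard_isNClique_subset_le_two_of_not_adj hu hx hy hxy hadj)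

end CliquesInSmallSet

theorem statement6_general {V : Type*} (H : SimpleGraph V) [H.LocallyFinite] (p q : ℕ) (S : Set V)
    (hS : Maximal (H.CliqueFreeOn · p) S) (hdeg : ∀ x ∉ S, H.degree x < p + q) :
    ∀ v ∈ Sᶜ,
      ({t : Finset V | ↑t ⊆ Sᶜ ∧ H.IsNClique q t ∧ v ∈ t}.ncard ≤ 2) ∨
      (∃ t : Finset V, ↑t ⊆ Sᶜ ∧ H.IsNClique (q + 1) t ∧ v ∈ t ∧
        ∀ x ∈ t, ∀ y ∈ Sᶜ, H.Adj x y → y ∈ t) := by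
  classical
  intro v hv
  have hout (x : V) (hx : x ∈ Sᶜ) : #(neighborFinsetIn H Sᶜ x) ≤ q :=
    card_neighborFinsetIn_compl_le_of_maximal hS hx (hdeg x hx)
  set u := insert v (neighborFinsetIn H Sᶜ v) with hu
  have hcard : #u ≤ q + 1 := (card_insert_le _ _).trans (by gcongr; exact hout v hv)
  have huS : ↑u ⊆ Sᶜ := by
    rw [hu, coe_insert]
    exact Set.insert_subset hv fun w hw ↦ (mem_neighborFinsetIn.1 hw).2
  have hsub : {t : Finset V | ↑t ⊆ Sᶜ ∧ H.IsNClique q t ∧ v ∈ t} ⊆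
      {t | t ⊆ u ∧ H.IsNClique q t} := fun t ⟨htS, ht, hvt⟩ ↦
    ⟨subset_insert_neighborFinsetIn_of_isClique ht.isClique hvt
      (htS.trans (Set.subset_insert v _)), ht⟩
  have hfin : {t : Finset V | t ⊆ u ∧ H.IsNClique q t}.Finite :=
    u.powerset.finite_toSet.subset fun t ht ↦ mem_coe.2 (mem_powerset.2 ht.1)
  refine (ncard_isNClique_subset_le_two_or_isNClique hcard).imp
    (Set.ncard_le_ncard hsub hfin).trans fun hclique ↦
      ⟨u, huS, hclique, mem_insert_self _ _, fun x hx y hy hxy ↦ ?_⟩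
  exact neighborFinsetIn_subset_of_isNClique hclique huS hx (hout x (huS hx))
    (mem_neighborFinsetIn.2 ⟨hxy, hy⟩)

/-- Let `p, q ≥ 3` with `p + q = Δ(H) + 1` and let `S ∈ 𝓕` minimize the number of
`q`-cliques of `H[V ∖ S]` among all members of `𝓕`. Then every vertex `v ∉ S` lies
in at most two `q`-cliques of `H[V ∖ S]`, or lies in a `(q+1)`-clique of `H[V ∖ S]`
whose vertex set is a connected component of `H[V ∖ S]`. -/
theorem statement6 {V : Type*} [Fintype V] (H : SimpleGraph V) [DecidableRel H.Adj]
    (p q : ℕ) (hp : 3 ≤ p) (hq : 3 ≤ q) (hpq : p + q = H.maxDegree + 1)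
    (S : Set V) (hSF : memF H p S)
    (hSmin : ∀ T : Set V, memF H p T → cliqueCountOn H Sᶜ q ≤ cliqueCountOn H Tᶜ q) :
    ∀ v ∈ Sᶜ,
      ({t : Finset V | ↑t ⊆ Sᶜ ∧ H.IsNClique q t ∧ v ∈ t}.ncard ≤ 2) ∨
      (∃ t : Finset V, ↑t ⊆ Sᶜ ∧ H.IsNClique (q + 1) t ∧ v ∈ t ∧
        ∀ x ∈ t, ∀ y ∈ Sᶜ, H.Adj x y → y ∈ t) :=
  statement6_general H p q S hSF.maximal_cliqueFreeOn fun x _ ↦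
    hpq ▸ Nat.lt_succ_of_le (H.degree_le_maxDegree x)
end

section
/- Let H be a finite simple graph and let p, q ≥ 3 be integers with p + q = Δ(H) + 1. Let S ∈ F be chosen so that, among all members of F, the number of q-cliques of H[V(H) ∖ S] is minimum, and let K⁰ be a q-clique of H[V(H) ∖ S] containing a vertex v_0. If there exists a vertex y ∈ A_{v_0} ∖ {v_0} and a q-clique K^y of H[((V(H) ∖ S) ∖ {v_0}) ∪ {y}] containing y such that |K^y ∩ (K⁰ ∖ {v_0})| = q − 2, then H contains a complete subgraph on Δ(H) − 1 vertices. -/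
/-- `A_v`: the set of vertices `y ∈ S ∪ {v}` lying in every `p`-clique of
`H[S ∪ {v}]` that contains `v`. -/
def ASet {V : Type*} (H : SimpleGraph V) (p : ℕ) (S : Set V) (v : V) : Set V :=
  {y ∈ S ∪ {v} | ∀ t : Finset V, ↑t ⊆ S ∪ {v} → H.IsNClique p t → v ∈ t → y ∈ t}

/-!
Let `N` be the set of neighbours in `S` of a vertex `b ∉ S`. By maximality of `S` some `p`-clique
of `H[S ∪ {b}]` contains `b`, so `|N| ≥ p - 1`; if `|N| = p - 1`, then `N` is a clique. In that
case exchanging any `y ∈ N` for `b` keeps `S` maximum and `K_p`-free and leaves a single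
`(p - 1)`-clique through `b`. As `S` has the fewest `(p - 1)`-cliques, `N` is the only
`(p - 1)`-clique of `H[S]` through `y`.

A vertex `b` of `Kʸ ∩ K⁰` has `q` neighbours in `(K⁰ ∪ Kʸ) ∖ S`, hence at most
`Δ(H) - q = p - 1` in `S`. If `P` is a `p`-clique of `H[S ∪ {v₀}]` through `v₀`, then `y ∈ P`, so
`P ∖ {v₀}` is a `(p - 1)`-clique of `H[S]` through `y` and must be the neighbourhood of `b` in
`S`. Therefore `P ∪ (Kʸ ∩ K⁰)` is a clique on `p + (q - 2)` vertices.
-/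

open scoped Finset

section

variable {V : Type*} {H : SimpleGraph V} {p q r : ℕ} {S W : Set V} {b v y : V}
  {K L P Q t : Finset V}

/-- The `r`-cliques of `H[W ∪ {v}]` that contain `v`. The vertex `v` may or may not lie in `W`, so
that the same notion serves for `p`-cliques created by an outside vertex and for
`(p - 1)`-cliques through a vertex of `S`. -/
def cliquesThrough (H : SimpleGraph V) (W : Set V) (r : ℕ) (v : V) : Set (Finset V) :=
  {t | ↑t ⊆ insert v W ∧ H.IsNClique r t ∧ v ∈ t}

theorem coe_subset_of_mem_cliquesThrough (ht : t ∈ cliquesThrough H W r b) :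
    (t : Set V) ⊆ insert b (H.neighborSet b ∩ W) := by
  obtain ⟨htW, hclique, hbt⟩ := ht
  intro x hx
  rcases htW hx with rfl | hxW
  · exact Set.mem_insert _ _
  · rcases eq_or_ne x b with rfl | hxb
    · exact Set.mem_insert _ _
    · exact Set.mem_insert_of_mem _ ⟨hclique.1 hbt hx hxb.symm, hxW⟩

theorem le_ncard_add_one_of_mem_cliquesThrough [Finite V] (ht : t ∈ cliquesThrough H W r b) :
    r ≤ (H.neighborSet b ∩ W).ncard + 1 :=
  calc r = (t : Set V).ncard := by rw [Set.ncard_coe_finset, ht.2.1.2]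
    _ ≤ (insert b (H.neighborSet b ∩ W)).ncard :=
      Set.ncard_le_ncard (coe_subset_of_mem_cliquesThrough ht)
    _ ≤ (H.neighborSet b ∩ W).ncard + 1 := Set.ncard_insert_le _ _

theorem coe_eq_of_mem_cliquesThrough [Finite V] (ht : t ∈ cliquesThrough H W r b)
    (hN : (H.neighborSet b ∩ W).ncard < r) :
    (t : Set V) = insert b (H.neighborSet b ∩ W) := by
  refine Set.eq_of_subset_of_ncard_le (coe_subset_of_mem_cliquesThrough ht) ?_
  rw [Set.ncard_coe_finset, ht.2.1.2]
  exact (Set.ncard_insert_le _ _).trans hN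

theorem cliquesThrough_subsingleton_of_ncard_lt [Finite V]
    (hN : (H.neighborSet b ∩ W).ncard < r) :
    (cliquesThrough H W r b).Subsingleton := fun _ hs _ ht =>
  Finset.coe_injective <|
    (coe_eq_of_mem_cliquesThrough hs hN).trans (coe_eq_of_mem_cliquesThrough ht hN).symm

theorem erase_mem_cliquesThrough [DecidableEq V] (ht : t ∈ cliquesThrough H W r v)
    (hy : y ∈ t) (hyv : y ≠ v) : t.erase v ∈ cliquesThrough H W (r - 1) y := by
  obtain ⟨htW, hclique, hvt⟩ := ht
  refine ⟨fun x hx => ?_, hclique.erase_of_mem hvt, Finset.mem_erase.2 ⟨hyv, hy⟩⟩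
  obtain ⟨hxv, hxt⟩ := Finset.mem_erase.1 hx
  exact Set.mem_insert_of_mem _ ((htW hxt).resolve_left hxv)

theorem cliqueFreeOn_insert_iff :
    H.CliqueFreeOn (insert v W) r ↔ H.CliqueFreeOn W r ∧ cliquesThrough H W r v = ∅ := by
  constructor
  · exact fun h => ⟨h.subset H (Set.subset_insert v W),
      Set.eq_empty_of_forall_notMem fun t ht => h ht.1 ht.2.1⟩
  · rintro ⟨hW, hempty⟩ t htW hclique
    by_cases hvt : v ∈ t
    · exact hempty.subset ⟨htW, hclique, hvt⟩
    · exact hW ((Set.subset_insert_iff_of_notMem (Finset.mem_coe.not.2 hvt)).1 htW) hclique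

theorem cliqueCountOn_insert [Finite V] (hv : v ∉ W) :
    cliqueCountOn H (insert v W) r = cliqueCountOn H W r + (cliquesThrough H W r v).ncard := by
  have hsplit : {t : Finset V | ↑t ⊆ insert v W ∧ H.IsNClique r t} =
      {t : Finset V | ↑t ⊆ W ∧ H.IsNClique r t} ∪ cliquesThrough H W r v := by
    ext t
    constructor
    · rintro ⟨htW, hclique⟩
      by_cases hvt : v ∈ t
      · exact Or.inr ⟨htW, hclique, hvt⟩
      · exact Or.inl
          ⟨(Set.subset_insert_iff_of_notMem (Finset.mem_coe.not.2 hvt)).1 htW, hclique⟩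
    · rintro (⟨htW, hclique⟩ | ⟨htW, hclique, -⟩)
      · exact ⟨htW.trans (Set.subset_insert v W), hclique⟩
      · exact ⟨htW, hclique⟩
  have hdisj : Disjoint {t : Finset V | ↑t ⊆ W ∧ H.IsNClique r t} (cliquesThrough H W r v) :=
    Set.disjoint_left.2 fun _ ht ht' => hv (ht.1 ht'.2.2)
  rw [cliqueCountOn, hsplit, Set.ncard_union_eq hdisj, cliqueCountOn]

theorem memF.cliquesThrough_nonempty [Finite V] (hS : memF H p S) (hv : v ∉ S) :
    (cliquesThrough H S p v).Nonempty := by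
  by_contra hempty
  have hle := hS.2.1 _
    (cliqueFreeOn_insert_iff.2 ⟨hS.1, Set.not_nonempty_iff_eq_empty.1 hempty⟩)
  rw [Set.ncard_insert_of_notMem hv] at hle
  omega

theorem memF.ncard_cliquesThrough_le_of_exchange [Finite V] (hS : memF H p (insert y W))
    (hy : y ∉ W) (hb : b ∉ W) (hfree : H.CliqueFreeOn (insert b W) p) :
    (cliquesThrough H W (p - 1) y).ncard ≤ (cliquesThrough H W (p - 1) b).ncard := by
  have hcard : (insert b W).ncard = (insert y W).ncard := by
    rw [Set.ncard_insert_of_notMem hb, Set.ncard_insert_of_notMem hy]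
  have hcount := hS.2.2 _ hfree fun U hU => hcard ▸ hS.2.1 U hU
  rw [cliqueCountOn_insert hy, cliqueCountOn_insert hb] at hcount
  exact Nat.add_le_add_iff_left.1 hcount

theorem memF.cliquesThrough_subsingleton_of_exchange [Finite V] (hS : memF H p (insert y W))
    (hy : y ∉ W) (hb : b ∉ W) (hN : (H.neighborSet b ∩ W).ncard + 1 < p) :
    (cliquesThrough H W (p - 1) y).Subsingleton := by
  have hempty : cliquesThrough H W p b = ∅ :=
    Set.eq_empty_of_forall_notMem fun t ht =>
      (le_ncard_add_one_of_mem_cliquesThrough ht).not_gt hN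
  have hfree : H.CliqueFreeOn (insert b W) p :=
    cliqueFreeOn_insert_iff.2 ⟨hS.1.subset H (Set.subset_insert y W), hempty⟩
  have hunique : (cliquesThrough H W (p - 1) b).Subsingleton :=
    cliquesThrough_subsingleton_of_ncard_lt (Nat.lt_sub_of_add_lt hN)
  exact Set.ncard_le_one_iff_subsingleton.1
    ((hS.ncard_cliquesThrough_le_of_exchange hy hb hfree).trans
      (Set.ncard_le_one_iff_subsingleton.2 hunique))

theorem memF.cliquesThrough_subsingleton [Finite V] (hS : memF H p S) (hb : b ∉ S)
    (hy : y ∈ H.neighborSet b ∩ S) (hN : (H.neighborSet b ∩ S).ncard < p) :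
    (cliquesThrough H S (p - 1) y).Subsingleton := by
  obtain ⟨W, hyW, rfl⟩ : ∃ W, y ∉ W ∧ insert y W = S :=
    ⟨S \ {y}, Set.notMem_sdiff_of_mem (Set.mem_singleton y), Set.insert_sdiff_self_of_mem hy.2⟩
  rw [Set.inter_insert_of_mem hy.1, Set.ncard_insert_of_notMem fun h => hyW h.2] at hN
  have hunique := hS.cliquesThrough_subsingleton_of_exchange hyW
    (fun h => hb (Set.mem_insert_of_mem y h)) hN
  simpa only [cliquesThrough, Set.insert_idem] using hunique

theorem memF.coe_eq_neighborSet_inter [Finite V] (hS : memF H p S) (hb : b ∉ S)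
    (hy : y ∈ H.neighborSet b ∩ S) (hN : (H.neighborSet b ∩ S).ncard < p)
    (hQ : Q ∈ cliquesThrough H S (p - 1) y) :
    (Q : Set V) = H.neighborSet b ∩ S := by
  classical
  obtain ⟨R, hR⟩ := hS.cliquesThrough_nonempty hb
  have hRN : (R : Set V) = insert b (H.neighborSet b ∩ S) :=
    coe_eq_of_mem_cliquesThrough hR hN
  have hyR : y ∈ R := Finset.mem_coe.1 (hRN ▸ Set.mem_insert_of_mem b hy)
  have hyb : y ≠ b := fun h => hb (h ▸ hy.2)
  have hQR : Q = R.erase b :=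
    hS.cliquesThrough_subsingleton hb hy hN hQ (erase_mem_cliquesThrough hR hyR hyb)
  rw [hQR, Finset.coe_erase, hRN, Set.insert_sdiff_self_of_notMem fun h => hb h.2]

theorem memF.adj_of_mem_cliquesThrough [Finite V] (hS : memF H p S) (hb : b ∉ S)
    (hy : y ∈ H.neighborSet b ∩ S) (hN : (H.neighborSet b ∩ S).ncard < p)
    (hv : v ∉ S) (hP : P ∈ cliquesThrough H S p v) (hyP : y ∈ P) :
    ∀ x ∈ P, x ≠ v → H.Adj b x := by
  classical
  intro x hxP hxv
  have hyv : y ≠ v := fun h => hv (h ▸ hy.2)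
  have hPN := hS.coe_eq_neighborSet_inter hb hy hN (erase_mem_cliquesThrough hP hyP hyv)
  exact (hPN.subset (Finset.mem_coe.2 (Finset.mem_erase.2 ⟨hxv, hxP⟩))).1

theorem ncard_neighborSet_inter_add_card_le [Fintype (H.neighborSet b)]
    (ht : (t : Set V) ⊆ insert b (H.neighborSet b)) (htS : (t : Set V) ∩ S ⊆ {y}) :
    (H.neighborSet b ∩ S).ncard + #t ≤ H.degree b + 2 := by
  have hfin : (H.neighborSet b ∩ S).Finite := (Set.toFinite (H.neighborSet b)).inter_of_left S
  have hunion : (H.neighborSet b ∩ S ∪ t).ncard ≤ H.degree b + 1 :=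
    calc (H.neighborSet b ∩ S ∪ t).ncard
        ≤ (insert b (H.neighborSet b)).ncard :=
          Set.ncard_le_ncard (Set.union_subset
            (Set.inter_subset_left.trans (Set.subset_insert b _)) ht)
      _ ≤ (H.neighborSet b).ncard + 1 := Set.ncard_insert_le _ _
      _ = H.degree b + 1 := by
          rw [← Nat.card_coe_set_eq, Nat.card_eq_fintype_card, H.card_neighborSet_eq_degree]
  have hinter : (H.neighborSet b ∩ S ∩ t).ncard ≤ 1 :=
    calc (H.neighborSet b ∩ S ∩ t).ncard
        ≤ ({y} : Set V).ncard := Set.ncard_le_ncard fun _ hx => htS ⟨hx.2, hx.1.2⟩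
      _ = 1 := Set.ncard_singleton y
  have hadd := Set.ncard_union_add_ncard_inter (H.neighborSet b ∩ S) (t : Set V) hfin
  rw [Set.ncard_coe_finset] at hadd
  omega

theorem ncard_neighborSet_inter_lt_of_mem_inter [DecidableEq V] [Fintype (H.neighborSet b)]
    (hK : H.IsNClique q K) (hKS : (K : Set V) ⊆ Sᶜ) (hL : H.IsNClique q L)
    (hLS : (L : Set V) ⊆ insert y Sᶜ) (hLK : #(L ∩ K) + 2 = q) (hb : b ∈ L ∩ K)
    (hdeg : H.degree b < p + q) :
    (H.neighborSet b ∩ S).ncard < p := by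
  obtain ⟨hbL, hbK⟩ := Finset.mem_inter.1 hb
  have hsub : ((L ∪ K : Finset V) : Set V) ⊆ insert b (H.neighborSet b) := by
    intro x hx
    refine (eq_or_ne x b).imp_right fun hxb => ?_
    rcases Finset.mem_union.1 hx with hxL | hxK
    · exact hL.1 hbL hxL hxb.symm
    · exact hK.1 hbK hxK hxb.symm
  have hinter : ((L ∪ K : Finset V) : Set V) ∩ S ⊆ {y} := by
    rintro x ⟨hx, hxS⟩
    rcases Finset.mem_union.1 hx with hxL | hxK
    · exact (hLS hxL).resolve_right fun h => h hxS
    · exact absurd hxS (hKS hxK)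
  have hle := ncard_neighborSet_inter_add_card_le hsub hinter
  have hunion := Finset.card_union_add_card_inter L K
  rw [hL.2, hK.2] at hunion
  omega

theorem isNClique_union [DecidableEq V] {m n : ℕ} {s t : Finset V} (hs : H.IsNClique m s)
    (ht : H.IsNClique n t) (hst : ∀ x ∈ s, ∀ z ∈ t, H.Adj x z) :
    H.IsNClique (m + n) (s ∪ t) where
  isClique := by
    rw [Finset.coe_union]
    exact Set.pairwise_union.2
      ⟨hs.1, ht.1, fun x hx z hz _ => ⟨hst x hx z hz, (hst x hx z hz).symm⟩⟩
  card_eq := by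
    rw [Finset.card_union_of_disjoint
      (Finset.disjoint_left.2 fun x hxs hxt => (hst x hxs x hxt).ne rfl), hs.2, ht.2]

theorem memF.isNClique_union_inter [Finite V] [DecidableEq V] [H.LocallyFinite]
    (hS : memF H p S) (hK : H.IsNClique q K) (hKS : (K : Set V) ⊆ Sᶜ) (hvK : v ∈ K)
    (hL : H.IsNClique q L) (hLS : (L : Set V) ⊆ insert y Sᶜ) (hvL : v ∉ L)
    (hyL : y ∈ L) (hyS : y ∈ S) (hLK : #(L ∩ K) + 2 = q)
    (hdeg : ∀ b ∈ L ∩ K, H.degree b < p + q)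
    (hP : P ∈ cliquesThrough H S p v) (hyP : y ∈ P) :
    H.IsNClique (p + #(L ∩ K)) (P ∪ L ∩ K) := by
  have hinter : H.IsNClique #(L ∩ K) (L ∩ K) :=
    ⟨hL.1.subset (Finset.coe_subset.2 Finset.inter_subset_left), rfl⟩
  refine isNClique_union hP.2.1 hinter fun x hxP b hb => SimpleGraph.Adj.symm ?_
  obtain ⟨hbL, hbK⟩ := Finset.mem_inter.1 hb
  rcases eq_or_ne x v with rfl | hxv
  · exact hK.1 hbK hvK fun h => hvL (h ▸ hbL)
  · have hbS : b ∉ S := hKS hbK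
    have hby : y ∈ H.neighborSet b ∩ S :=
      ⟨hL.1 hbL hyL fun h => hbS (h ▸ hyS), hyS⟩
    have hN := ncard_neighborSet_inter_lt_of_mem_inter hK hKS hL hLS hLK hb (hdeg b hb)
    exact hS.adj_of_mem_cliquesThrough hbS hby hN (hKS hvK) hP hyP x hxP hxv

end

theorem statement9_general {V : Type*} [Fintype V] [DecidableEq V]
    (H : SimpleGraph V) [DecidableRel H.Adj]
    (p q : ℕ) (hq : 2 ≤ q) (hpq : p + q = H.maxDegree + 1)
    (S : Set V) (hS : memF H p S) (v₀ : V)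
    (K₀ : Finset V) (hK₀S : ↑K₀ ⊆ Sᶜ) (hK₀ : H.IsNClique q K₀) (hv₀K₀ : v₀ ∈ K₀)
    (hexists : ∃ y ∈ ASet H p S v₀ \ {v₀}, ∃ Ky : Finset V,
      ↑Ky ⊆ (Sᶜ \ {v₀}) ∪ {y} ∧ H.IsNClique q Ky ∧ y ∈ Ky ∧
      (Ky ∩ K₀.erase v₀).card = q - 2) :
    ∃ t : Finset V, H.IsNClique (H.maxDegree - 1) t := by
  obtain ⟨y, ⟨⟨hySv, hyA⟩, hyv⟩, Ky, hKyS, hKy, hyKy, hinter⟩ := hexists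
  rw [Set.union_singleton] at hySv hyA hKyS
  have hyS : y ∈ S := hySv.resolve_left hyv
  have hv₀Ky : v₀ ∉ Ky := fun h => (hKyS h).elim (fun h' => hyv h'.symm) fun h' => h'.2 rfl
  have hKyS' : (Ky : Set V) ⊆ insert y Sᶜ :=
    hKyS.trans (Set.insert_subset_insert Set.sdiff_subset)
  have hcard : #(Ky ∩ K₀) + 2 = q := by
    rw [Finset.inter_erase, Finset.erase_eq_of_notMem (by simp [hv₀Ky])] at hinter
    omega
  have hdeg : ∀ b ∈ Ky ∩ K₀, H.degree b < p + q := fun b _ =>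
    hpq ▸ Nat.lt_succ_of_le (H.degree_le_maxDegree b)
  obtain ⟨P, hP⟩ := hS.cliquesThrough_nonempty (hK₀S hv₀K₀)
  have hyP : y ∈ P := hyA P hP.1 hP.2.1 hP.2.2
  have hclique := hS.isNClique_union_inter hK₀ hK₀S hv₀K₀ hKy hKyS' hv₀Ky hyKy hyS hcard hdeg
    hP hyP
  have hsize : p + #(Ky ∩ K₀) = H.maxDegree - 1 := by omega
  exact ⟨_, hsize ▸ hclique⟩

/-- Let `p, q ≥ 3` with `p + q = Δ(H) + 1`, let `S ∈ 𝓕` minimize the number of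
`q`-cliques of `H[V ∖ S]` among all members of `𝓕`, and let `K⁰` be a `q`-clique
of `H[V ∖ S]` containing `v₀`. If there exist `y ∈ A_{v₀} ∖ {v₀}` and a `q`-clique
`Kʸ` of `H[((V ∖ S) ∖ {v₀}) ∪ {y}]` containing `y` with `|Kʸ ∩ (K⁰ ∖ {v₀})| = q − 2`,
then `H` contains a complete subgraph on `Δ(H) − 1` vertices. -/
theorem statement9 {V : Type*} [Fintype V] [DecidableEq V]
    (H : SimpleGraph V) [DecidableRel H.Adj]
    (p q : ℕ) (hp : 3 ≤ p) (hq : 3 ≤ q) (hpq : p + q = H.maxDegree + 1)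
    (S : Set V) (hSF : memF H p S)
    (hSmin : ∀ T : Set V, memF H p T → cliqueCountOn H Sᶜ q ≤ cliqueCountOn H Tᶜ q)
    (v₀ : V)
    (K₀ : Finset V) (hK₀ : ↑K₀ ⊆ Sᶜ) (hK₀clique : H.IsNClique q K₀) (hv₀K₀ : v₀ ∈ K₀)
    (hexists : ∃ y ∈ ASet H p S v₀ \ {v₀}, ∃ Ky : Finset V,
      ↑Ky ⊆ (Sᶜ \ {v₀}) ∪ {y} ∧ H.IsNClique q Ky ∧ y ∈ Ky ∧
      (Ky ∩ K₀.erase v₀).card = q - 2) :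
    ∃ t : Finset V, H.IsNClique (H.maxDegree - 1) t :=
  statement9_general H p q (Nat.le_of_succ_le hq) hpq S hSF v₀ K₀ hK₀ hK₀clique hv₀K₀ hexists
end
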